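/- arXiv:2204.13005 — 6 statements merged into one kernel-verified Lean document; each statement's English description precedes it below -/
import Mathlib

section
/- (Weighted integral inequality for the oscillatory boundary term of the Robin problem.) Let s ≥ -1/2 and let γ be a nonzero real number. There exists a constant C = C(s,γ) > 0 such that for every measurable function G : ℝ² → ℂ, ∫_{k₁∈ℝ} ∫_{k₂=0}^∞ [(1+k₁²)^s + k₂^{2s}] · (k₂²/(k₂²+γ²)) · |G(k₁, -k₁²-k₂²)|² dk₂ dk₁ ≤ C ( ∫_{k₁∈ℝ} (1+k₁²)^s ∫_{τ=-∞}^{-k₁²} (1+(τ+k₁²)²)^{-1/4} |G(k₁,τ)|² dτ dk₁ + ∫_{k₁∈ℝ} ∫_{τ=-∞}^{-k₁²} (1+(τ+k₁²)²)^{(2s-1)/4} |G(k₁,τ)|² dτ dk₁ ), where both sides are interpreted in [0,∞]. -/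
open MeasureTheory Set
open scoped ENNReal NNReal

/-!
The substitution `τ = c - k²` turns `dτ` into `2k dk` and `1 + (τ - c)²` into `1 + k⁴`. A weight
`k ^ p * k² / (k² + γ²)` in `k` is therefore controlled by the weight
`(1 + (τ - c)²) ^ ((p - 1) / 4)` in `τ` as soon as it is at most a constant times
`k * (1 + k⁴) ^ ((p - 1) / 4)`. Both have size `k ^ p` for large `k`, while for small `k` they have
sizes `k ^ (p + 2)` and `k`, which is harmless exactly when `p ≥ -1`. The two terms of the estimate
are the cases `p = 0` and `p = 2s`, applied for each fixed tangential frequency.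
-/

lemma image_const_sub_sq_Ioi_zero (c : ℝ) : (fun k : ℝ ↦ c - k ^ 2) '' Ioi 0 = Iio c := by
  ext τ
  simp only [mem_image, mem_Ioi, mem_Iio]
  constructor
  · rintro ⟨k, hk, rfl⟩
    exact sub_lt_self c (pow_pos hk 2)
  · intro hτ
    have hpos : 0 < c - τ := sub_pos.2 hτ
    exact ⟨√(c - τ), Real.sqrt_pos.2 hpos, by rw [Real.sq_sqrt hpos.le, sub_sub_cancel]⟩

lemma lintegral_Iio_eq_lintegral_Ioi_const_sub_sq (c : ℝ) (f : ℝ → ℝ≥0∞) :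
    ∫⁻ τ in Iio c, f τ = ∫⁻ k in Ioi (0 : ℝ), ENNReal.ofReal (2 * k) * f (c - k ^ 2) := by
  have hderiv (k : ℝ) (_ : k ∈ Ioi (0 : ℝ)) :
      HasDerivWithinAt (fun k : ℝ ↦ c - k ^ 2) (-(2 * k)) (Ioi 0) k := by
    simpa using ((hasDerivAt_pow 2 k).const_sub c).hasDerivWithinAt
  have hanti : AntitoneOn (fun k : ℝ ↦ c - k ^ 2) (Ioi 0) := fun k hk _ _ hle ↦
    sub_le_sub_left (pow_le_pow_left₀ (le_of_lt hk) hle 2) c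
  rw [← image_const_sub_sq_Ioi_zero,
    lintegral_image_eq_lintegral_deriv_mul_of_antitoneOn measurableSet_Ioi hderiv hanti]
  simp only [neg_neg]

lemma rpow_le_one_add_sq_sq_rpow {k q : ℝ} (hk : 0 ≤ k) (hq : 0 ≤ q) :
    k ^ q ≤ (1 + (k ^ 2) ^ 2) ^ (q / 4) :=
  calc k ^ q = ((k ^ 2) ^ 2) ^ (q / 4) := by
        rw [← pow_mul, ← Real.rpow_natCast_mul hk]
        congr 1
        push_cast
        ring
    _ ≤ (1 + (k ^ 2) ^ 2) ^ (q / 4) := by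
        gcongr
        exact le_add_of_nonneg_left zero_le_one

lemma one_add_sq_rpow_half_le {x : ℝ} (hx : 0 ≤ x) : (1 + x ^ 2) ^ (1 / 2 : ℝ) ≤ 1 + x := by
  simpa only [Real.sqrt_eq_rpow, Real.norm_of_nonneg hx] using sqrt_one_add_norm_sq_le x

lemma one_add_le_mul_add {x y : ℝ} (hx : 0 ≤ x) (hy : 0 < y) : 1 + x ≤ (1 + y⁻¹) * (x + y) := by
  have hexpand : (1 + y⁻¹) * (x + y) = 1 + x + (y + y⁻¹ * x) := by
    field_simp
    ring
  rw [hexpand]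
  exact le_add_of_nonneg_right (by positivity)

lemma rpow_mul_sq_div_le {k p γ : ℝ} (hk : 0 < k) (hp : -1 ≤ p) (hγ : γ ≠ 0) :
    k ^ p * (k ^ 2 / (k ^ 2 + γ ^ 2)) ≤
      (1 + (γ ^ 2)⁻¹) * (k * (1 + (k ^ 2) ^ 2) ^ ((p - 1) / 4)) := by
  have hsplit : (1 + (k ^ 2) ^ 2) ^ ((p + 1) / 4) =
      (1 + (k ^ 2) ^ 2) ^ ((p - 1) / 4) * (1 + (k ^ 2) ^ 2) ^ (1 / 2 : ℝ) := by
    rw [← Real.rpow_add (by positivity)]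
    ring_nf
  have hhalf : (1 + (k ^ 2) ^ 2) ^ (1 / 2 : ℝ) ≤ (1 + (γ ^ 2)⁻¹) * (k ^ 2 + γ ^ 2) :=
    (one_add_sq_rpow_half_le (sq_nonneg k)).trans
      (one_add_le_mul_add (sq_nonneg k) (by positivity))
  rw [← mul_div_assoc, div_le_iff₀ (by positivity)]
  calc k ^ p * k ^ 2 = k * k ^ (p + 1) := by rw [Real.rpow_add_one hk.ne']; ring
    _ ≤ k * (1 + (k ^ 2) ^ 2) ^ ((p + 1) / 4) := by
        gcongr
        exact rpow_le_one_add_sq_sq_rpow hk.le (by linarith)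
    _ ≤ k * ((1 + (k ^ 2) ^ 2) ^ ((p - 1) / 4) * ((1 + (γ ^ 2)⁻¹) * (k ^ 2 + γ ^ 2))) := by
        rw [hsplit]
        gcongr
    _ = _ := by ring

lemma lintegral_Ioi_rpow_mul_sq_div_le {p γ : ℝ} (hp : -1 ≤ p) (hγ : γ ≠ 0) (c : ℝ)
    (f : ℝ → ℝ≥0∞) :
    ∫⁻ k in Ioi (0 : ℝ), ENNReal.ofReal (k ^ p * (k ^ 2 / (k ^ 2 + γ ^ 2))) * f (c - k ^ 2) ≤
      ENNReal.ofReal ((1 + (γ ^ 2)⁻¹) / 2) *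
        ∫⁻ τ in Iio c, ENNReal.ofReal ((1 + (τ - c) ^ 2) ^ ((p - 1) / 4)) * f τ := by
  rw [lintegral_Iio_eq_lintegral_Ioi_const_sub_sq, ← lintegral_const_mul' _ _ ENNReal.ofReal_ne_top]
  refine setLIntegral_mono' measurableSet_Ioi fun k (hk : 0 < k) ↦ ?_
  rw [sub_sub_cancel_left, neg_sq, ← mul_assoc (ENNReal.ofReal (2 * k)), ← mul_assoc,
    ← ENNReal.ofReal_mul (by positivity), ← ENNReal.ofReal_mul (by positivity)]
  gcongr ENNReal.ofReal ?_ * _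
  refine (rpow_mul_sq_div_le hk hp hγ).trans_eq ?_
  ring

lemma lintegral_ofReal_add_mul_mul_le {α : Type*} [MeasurableSpace α] {μ : Measure α} (a : ℝ)
    {b m : α → ℝ} {f : α → ℝ≥0∞} (hm : ∀ᵐ x ∂μ, 0 ≤ m x)
    (hbf : AEMeasurable (fun x ↦ ENNReal.ofReal (b x * m x) * f x) μ) :
    ∫⁻ x, ENNReal.ofReal ((a + b x) * m x) * f x ∂μ ≤
      ENNReal.ofReal a * ∫⁻ x, ENNReal.ofReal (m x) * f x ∂μ +
        ∫⁻ x, ENNReal.ofReal (b x * m x) * f x ∂μ := by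
  rw [← lintegral_const_mul' _ _ ENNReal.ofReal_ne_top, ← lintegral_add_right' _ hbf]
  refine lintegral_mono_ae (hm.mono fun x hmx ↦ ?_)
  rw [← mul_assoc, ← ENNReal.ofReal_mul' hmx, ← add_mul, add_mul a]
  gcongr
  exact ENNReal.ofReal_add_le

/-- `X` is the space of tangential frequencies, `φ` the tangential dispersion relation (`k₁ ^ 2` on
the half-plane) and `w` the tangential Sobolev weight. -/
theorem robin_oscillatory_weighted_inequality_general {X : Type*} [MeasurableSpace X]
    (μ : Measure X) (w : X → ℝ) {φ : X → ℝ} (hφ : Measurable φ) {s γ : ℝ} (hs : -(1 / 2) ≤ s)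
    (hγ : γ ≠ 0) {F : X × ℝ → ℝ≥0∞} (hF : Measurable F) :
    ∫⁻ x, (∫⁻ k in Ioi (0 : ℝ),
        ENNReal.ofReal ((w x + k ^ (2 * s)) * (k ^ 2 / (k ^ 2 + γ ^ 2))) *
          F (x, -φ x - k ^ 2)) ∂μ ≤
      ENNReal.ofReal ((1 + (γ ^ 2)⁻¹) / 2) *
        (∫⁻ x, ENNReal.ofReal (w x) * (∫⁻ τ in Iio (-φ x),
            ENNReal.ofReal ((1 + (τ + φ x) ^ 2) ^ (-(1 / 4) : ℝ)) * F (x, τ)) ∂μ +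
          ∫⁻ x, (∫⁻ τ in Iio (-φ x),
            ENNReal.ofReal ((1 + (τ + φ x) ^ 2) ^ ((2 * s - 1) / 4)) * F (x, τ)) ∂μ) := by
  have hmeas : Measurable fun z : X × ℝ ↦
      ENNReal.ofReal (z.2 ^ (2 * s) * (z.2 ^ 2 / (z.2 ^ 2 + γ ^ 2))) *
        F (z.1, -φ z.1 - z.2 ^ 2) := by
    fun_prop
  have hfibre_zero (x : X) :
      ∫⁻ k in Ioi (0 : ℝ), ENNReal.ofReal (k ^ 2 / (k ^ 2 + γ ^ 2)) * F (x, -φ x - k ^ 2) ≤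
        ENNReal.ofReal ((1 + (γ ^ 2)⁻¹) / 2) * ∫⁻ τ in Iio (-φ x),
          ENNReal.ofReal ((1 + (τ + φ x) ^ 2) ^ (-(1 / 4) : ℝ)) * F (x, τ) := by
    simpa only [Real.rpow_zero, one_mul, zero_sub, neg_div, sub_neg_eq_add] using
      lintegral_Ioi_rpow_mul_sq_div_le (p := 0) (by norm_num) hγ (-φ x) fun τ ↦ F (x, τ)
  have hfibre_two_mul (x : X) :
      ∫⁻ k in Ioi (0 : ℝ), ENNReal.ofReal (k ^ (2 * s) * (k ^ 2 / (k ^ 2 + γ ^ 2))) *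
          F (x, -φ x - k ^ 2) ≤
        ENNReal.ofReal ((1 + (γ ^ 2)⁻¹) / 2) * ∫⁻ τ in Iio (-φ x),
          ENNReal.ofReal ((1 + (τ + φ x) ^ 2) ^ ((2 * s - 1) / 4)) * F (x, τ) := by
    simpa only [sub_neg_eq_add] using
      lintegral_Ioi_rpow_mul_sq_div_le (p := 2 * s) (by linarith) hγ (-φ x) fun τ ↦ F (x, τ)
  rw [mul_add, ← lintegral_const_mul' _ _ ENNReal.ofReal_ne_top,
    ← lintegral_const_mul' _ _ ENNReal.ofReal_ne_top]
  calc
    _ ≤ ∫⁻ x, (ENNReal.ofReal (w x) * (∫⁻ k in Ioi (0 : ℝ),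
            ENNReal.ofReal (k ^ 2 / (k ^ 2 + γ ^ 2)) * F (x, -φ x - k ^ 2)) +
          ∫⁻ k in Ioi (0 : ℝ), ENNReal.ofReal (k ^ (2 * s) * (k ^ 2 / (k ^ 2 + γ ^ 2))) *
            F (x, -φ x - k ^ 2)) ∂μ :=
        lintegral_mono fun x ↦ lintegral_ofReal_add_mul_mul_le (w x)
          (ae_of_all _ fun k ↦ by positivity) (hmeas.comp measurable_prodMk_left).aemeasurable
    _ = _ := lintegral_add_right _ hmeas.lintegral_prod_right'
    _ ≤ _ := by
        refine add_le_add (lintegral_mono fun x ↦ ?_) (lintegral_mono hfibre_two_mul)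
        rw [mul_left_comm]
        gcongr
        exact hfibre_zero x

/-- Weighted integral inequality for the oscillatory boundary term of the Robin problem. -/
theorem robin_oscillatory_weighted_inequality (s γ : ℝ) (hs : -(1/2 : ℝ) ≤ s) (hγ : γ ≠ 0) :
    ∃ C : ℝ, 0 < C ∧ ∀ G : ℝ × ℝ → ℂ, Measurable G →
      (∫⁻ k₁ : ℝ, ∫⁻ k₂ in Ioi (0:ℝ),
          ENNReal.ofReal (((1 + k₁^2) ^ s + k₂ ^ (2*s)) * (k₂^2 / (k₂^2 + γ^2)))
            * (‖G (k₁, -k₁^2 - k₂^2)‖₊ : ℝ≥0∞) ^ 2)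
      ≤ ENNReal.ofReal C *
        ((∫⁻ k₁ : ℝ, ENNReal.ofReal ((1 + k₁^2) ^ s) *
            ∫⁻ τ in Iio (-k₁^2),
              ENNReal.ofReal ((1 + (τ + k₁^2)^2) ^ (-(1/4) : ℝ))
                * (‖G (k₁, τ)‖₊ : ℝ≥0∞) ^ 2)
         + (∫⁻ k₁ : ℝ, ∫⁻ τ in Iio (-k₁^2),
              ENNReal.ofReal ((1 + (τ + k₁^2)^2) ^ ((2*s - 1)/4))
                * (‖G (k₁, τ)‖₊ : ℝ≥0∞) ^ 2)) := by
  exact ⟨(1 + (γ ^ 2)⁻¹) / 2, by positivity, fun G hG ↦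
    robin_oscillatory_weighted_inequality_general volume _ (measurable_id.pow_const 2) hs hγ
      (F := fun p ↦ (‖G p‖₊ : ℝ≥0∞) ^ 2) (by fun_prop)⟩
end

section
/- (Weighted integral inequality for the non-oscillatory boundary term of the Robin problem.) Let s ≥ 0 and let γ be a nonzero real number. There exists a constant C = C(s,γ) > 0 such that for every measurable function G : ℝ² → ℂ, ∫_{k₁∈ℝ} ∫_{k₂=0}^∞ (1+k₁²+k₂²)^s · (k₂²/(k₂²+γ²)) · |G(k₁, -k₁²+k₂²)|² dk₂ dk₁ ≤ C ( ∫_{k₁∈ℝ} (1+k₁²)^s ∫_{τ=-k₁²}^{∞} (1+(τ+k₁²)²)^{-1/4} |G(k₁,τ)|² dτ dk₁ + ∫_{k₁∈ℝ} ∫_{τ=-k₁²}^{∞} (1+(τ+k₁²)²)^{(2s-1)/4} |G(k₁,τ)|² dτ dk₁ ), where both sides are interpreted in [0,∞]. -/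
open MeasureTheory Set
open scoped ENNReal NNReal

/-!
On each fibre the substitution `τ = -k₁² + k₂²`, `dτ = 2 k₂ dk₂`, turns both integrals on the right
into integrals over `k₂ > 0`, so it suffices to compare weights. There
`(1 + k₁² + k₂²) ^ s ≲ (1 + k₁²) ^ s + (1 + k₂⁴) ^ (s / 2)`, and the Robin factor
`k₂² / (k₂² + γ²)` vanishes quickly enough at `k₂ = 0` to be dominated by the Jacobian times
`(1 + k₂⁴) ^ (-1 / 4)`, a function of size `min k₂ 1`.
-/

lemma image_const_add_pow_Ioi_zero (c : ℝ) {n : ℕ} (hn : n ≠ 0) :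
    (fun y : ℝ ↦ c + y ^ n) '' Ioi 0 = Ioi c := by
  ext τ
  constructor
  · rintro ⟨y, hy, rfl⟩
    exact lt_add_of_pos_right c (pow_pos hy n)
  · intro hτ
    have hpos : 0 < τ - c := sub_pos.2 hτ
    refine ⟨(τ - c) ^ (n⁻¹ : ℝ), Real.rpow_pos_of_pos hpos _, ?_⟩
    simp only [Real.rpow_inv_natCast_pow hpos.le hn, add_sub_cancel]

lemma lintegral_Ioi_eq_lintegral_Ioi_zero_const_add_pow (c : ℝ) {n : ℕ} (hn : n ≠ 0)
    (g : ℝ → ℝ≥0∞) :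
    ∫⁻ τ in Ioi c, g τ =
      ∫⁻ y in Ioi (0 : ℝ), ENNReal.ofReal (n * y ^ (n - 1)) * g (c + y ^ n) := by
  have hderiv (y : ℝ) (_ : y ∈ Ioi (0 : ℝ)) :
      HasDerivWithinAt (fun y ↦ c + y ^ n) (n * y ^ (n - 1)) (Ioi 0) y :=
    ((hasDerivAt_pow n y).const_add c).hasDerivWithinAt
  have hmono : MonotoneOn (fun y : ℝ ↦ c + y ^ n) (Ioi 0) := fun x hx y _ hxy ↦
    add_le_add_right (pow_le_pow_left₀ (le_of_lt hx) hxy n) c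
  rw [← image_const_add_pow_Ioi_zero c hn,
    lintegral_image_eq_lintegral_deriv_mul_of_monotoneOn measurableSet_Ioi hderiv hmono]

lemma add_rpow_le_two_rpow_mul_add {p q s : ℝ} (hp : 0 ≤ p) (hq : 0 ≤ q) (hs : 0 ≤ s) :
    (p + q) ^ s ≤ 2 ^ s * (p ^ s + q ^ s) := by
  have hmax : p + q ≤ 2 * max p q := by linarith [le_max_left p q, le_max_right p q]
  calc (p + q) ^ s ≤ (2 * max p q) ^ s := by gcongr
    _ = 2 ^ s * max (p ^ s) (q ^ s) := by
        rw [Real.mul_rpow zero_le_two (by positivity), Real.rpow_max hp hq hs]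
    _ ≤ 2 ^ s * (p ^ s + q ^ s) := by
        gcongr
        exact max_le_add_of_nonneg (by positivity) (by positivity)

lemma rpow_le_one_add_sq_rpow_half {t s : ℝ} (ht : 0 ≤ t) (hs : 0 ≤ s) :
    t ^ s ≤ (1 + t ^ 2) ^ (s / 2) :=
  calc t ^ s = (t ^ 2) ^ (s / 2) := by
        rw [← Real.rpow_natCast_mul ht]; congr 1; push_cast; ring
    _ ≤ (1 + t ^ 2) ^ (s / 2) := by gcongr; linarith

lemma add_rpow_le_two_rpow_abs_mul {p t : ℝ} (hp : 0 < p) (ht : 0 ≤ t) (s : ℝ) :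
    (p + t) ^ s ≤ 2 ^ |s| * (p ^ s + (1 + t ^ 2) ^ (s / 2)) := by
  rcases le_total 0 s with hs | hs
  · rw [abs_of_nonneg hs]
    refine (add_rpow_le_two_rpow_mul_add hp.le ht hs).trans ?_
    gcongr
    exact rpow_le_one_add_sq_rpow_half ht hs
  · calc (p + t) ^ s ≤ p ^ s := Real.rpow_le_rpow_of_nonpos hp (by linarith) hs
      _ ≤ p ^ s + (1 + t ^ 2) ^ (s / 2) := le_add_of_nonneg_right (by positivity)
      _ ≤ 2 ^ |s| * (p ^ s + (1 + t ^ 2) ^ (s / 2)) :=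
        le_mul_of_one_le_left (by positivity) (Real.one_le_rpow one_le_two (abs_nonneg s))

lemma mul_one_add_sq_sq_rpow_le (y : ℝ) :
    y * (1 + (y ^ 2) ^ 2) ^ (1 / 4 : ℝ) ≤ 1 + y ^ 2 := by
  refine le_of_pow_le_pow_left₀ four_ne_zero (by positivity) ?_
  have hroot : ((1 + (y ^ 2) ^ 2) ^ (1 / 4 : ℝ)) ^ 4 = 1 + (y ^ 2) ^ 2 := by
    rw [← Real.rpow_mul_natCast (by positivity)]; norm_num
  rw [mul_pow, hroot]
  nlinarith [sq_nonneg y, sq_nonneg (y ^ 2), sq_nonneg (y ^ 3)]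

lemma sq_div_sq_add_sq_le {y γ : ℝ} (hy : 0 ≤ y) (hγ : γ ≠ 0) :
    y ^ 2 / (y ^ 2 + γ ^ 2) ≤ (1 + 1 / γ ^ 2) * (y * (1 + (y ^ 2) ^ 2) ^ (-(1 / 4) : ℝ)) := by
  have hsum : 1 + y ^ 2 ≤ (1 + 1 / γ ^ 2) * (y ^ 2 + γ ^ 2) := by
    have hexpand : (1 + 1 / γ ^ 2) * (y ^ 2 + γ ^ 2) = 1 + y ^ 2 + (γ ^ 2 + y ^ 2 / γ ^ 2) := by
      field_simp; ring
    rw [hexpand]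
    exact le_add_of_nonneg_right (by positivity)
  rw [Real.rpow_neg (by positivity), ← div_eq_mul_inv, ← mul_div_assoc,
    div_le_div_iff₀ (by positivity) (by positivity)]
  calc y ^ 2 * (1 + (y ^ 2) ^ 2) ^ (1 / 4 : ℝ)
      = y * (y * (1 + (y ^ 2) ^ 2) ^ (1 / 4 : ℝ)) := by ring
    _ ≤ y * ((1 + 1 / γ ^ 2) * (y ^ 2 + γ ^ 2)) := by
        gcongr y * ?_
        exact (mul_one_add_sq_sq_rpow_le y).trans hsum
    _ = (1 + 1 / γ ^ 2) * y * (y ^ 2 + γ ^ 2) := by ring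

lemma robin_weight_le {p y γ : ℝ} (hp : 0 < p) (hy : 0 ≤ y) (hγ : γ ≠ 0) (s : ℝ) :
    (p + y ^ 2) ^ s * (y ^ 2 / (y ^ 2 + γ ^ 2)) ≤
      2 ^ |s| * (1 + 1 / γ ^ 2) * (2 * y *
        (p ^ s * (1 + (y ^ 2) ^ 2) ^ (-(1 / 4) : ℝ) + (1 + (y ^ 2) ^ 2) ^ ((2 * s - 1) / 4))) := by
  set b : ℝ := 1 + (y ^ 2) ^ 2
  have hb : 0 < b := by positivity
  have hsplit : b ^ ((2 * s - 1) / 4) = b ^ (s / 2) * b ^ (-(1 / 4) : ℝ) := by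
    rw [← Real.rpow_add hb]; congr 1; ring
  calc (p + y ^ 2) ^ s * (y ^ 2 / (y ^ 2 + γ ^ 2))
      ≤ 2 ^ |s| * (p ^ s + b ^ (s / 2)) * ((1 + 1 / γ ^ 2) * (y * b ^ (-(1 / 4) : ℝ))) :=
        mul_le_mul (add_rpow_le_two_rpow_abs_mul hp (sq_nonneg y) s) (sq_div_sq_add_sq_le hy hγ)
          (by positivity) (by positivity)
    _ = 2 ^ |s| * (1 + 1 / γ ^ 2) *
          (y * (p ^ s * b ^ (-(1 / 4) : ℝ) + b ^ ((2 * s - 1) / 4))) := by rw [hsplit]; ring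
    _ ≤ _ := by gcongr; linarith

lemma lintegral_ofReal_const_mul_add_mul {Y : Type*} [MeasurableSpace Y] (ν : Measure Y) {c : ℝ}
    (hc : 0 ≤ c) {u v : Y → ℝ} (hu : ∀ y, 0 ≤ u y) (hv : ∀ y, 0 ≤ v y) (hv_meas : Measurable v)
    {g : Y → ℝ≥0∞} (hg : Measurable g) :
    ∫⁻ y, ENNReal.ofReal (c * u y + v y) * g y ∂ν =
      ENNReal.ofReal c * ∫⁻ y, ENNReal.ofReal (u y) * g y ∂ν
        + ∫⁻ y, ENNReal.ofReal (v y) * g y ∂ν := by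
  have hvg : Measurable fun y ↦ ENNReal.ofReal (v y) * g y := by fun_prop
  rw [← lintegral_const_mul' _ _ ENNReal.ofReal_ne_top, ← lintegral_add_right _ hvg]
  refine lintegral_congr fun y ↦ ?_
  rw [ENNReal.ofReal_add (mul_nonneg hc (hu y)) (hv y), ENNReal.ofReal_mul hc, add_mul, mul_assoc]

lemma lintegral_robin_weight_le {p γ : ℝ} (hp : 0 < p) (hγ : γ ≠ 0) (s a : ℝ) {g : ℝ → ℝ≥0∞}
    (hg : Measurable g) :
    ∫⁻ y in Ioi (0 : ℝ),
        ENNReal.ofReal ((p + y ^ 2) ^ s * (y ^ 2 / (y ^ 2 + γ ^ 2))) * g (-a + y ^ 2) ≤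
      ENNReal.ofReal (2 ^ |s| * (1 + 1 / γ ^ 2)) *
        (ENNReal.ofReal (p ^ s) * (∫⁻ τ in Ioi (-a),
            ENNReal.ofReal ((1 + (τ + a) ^ 2) ^ (-(1 / 4) : ℝ)) * g τ)
          + ∫⁻ τ in Ioi (-a),
            ENNReal.ofReal ((1 + (τ + a) ^ 2) ^ ((2 * s - 1) / 4)) * g τ) := by
  rw [← lintegral_ofReal_const_mul_add_mul _ (by positivity) (fun _ ↦ by positivity)
      (fun _ ↦ by positivity) (by fun_prop) hg,
    lintegral_Ioi_eq_lintegral_Ioi_zero_const_add_pow (-a) two_ne_zero,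
    ← lintegral_const_mul' _ _ ENNReal.ofReal_ne_top]
  refine setLIntegral_mono' measurableSet_Ioi fun y hy ↦ ?_
  have hy : 0 ≤ y := le_of_lt hy
  simp only [neg_add_cancel_comm, Nat.cast_ofNat, Nat.add_one_sub_one, pow_one]
  rw [← mul_assoc, ← mul_assoc, ← ENNReal.ofReal_mul (by positivity),
    ← ENNReal.ofReal_mul (by positivity), mul_assoc _ (2 * y)]
  gcongr ENNReal.ofReal ?_ * _
  exact robin_weight_le hp hy hγ s

lemma measurable_lintegral_Ioi {X : Type*} [MeasurableSpace X] {b : X → ℝ} (hb : Measurable b)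
    {f : X × ℝ → ℝ≥0∞} (hf : Measurable f) :
    Measurable fun x ↦ ∫⁻ τ in Ioi (b x), f (x, τ) := by
  have hset : MeasurableSet {z : X × ℝ | b z.1 < z.2} :=
    measurableSet_lt (hb.comp measurable_fst) measurable_snd
  simp only [← lintegral_indicator measurableSet_Ioi]
  exact (hf.indicator hset).lintegral_prod_right'

theorem robin_nonoscillatory_weighted_inequality_general {X : Type*} [MeasurableSpace X]
    (μ : Measure X) (s : ℝ) {γ : ℝ} (hγ : γ ≠ 0) {p a : X → ℝ} (hp : ∀ x, 0 < p x)
    (ha : Measurable a) {f : X × ℝ → ℝ≥0∞} (hf : Measurable f) :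
    ∫⁻ x, (∫⁻ y in Ioi (0 : ℝ),
        ENNReal.ofReal ((p x + y ^ 2) ^ s * (y ^ 2 / (y ^ 2 + γ ^ 2))) * f (x, -a x + y ^ 2)) ∂μ ≤
      ENNReal.ofReal (2 ^ |s| * (1 + 1 / γ ^ 2)) *
        (∫⁻ x, (ENNReal.ofReal (p x ^ s) * ∫⁻ τ in Ioi (-a x),
            ENNReal.ofReal ((1 + (τ + a x) ^ 2) ^ (-(1 / 4) : ℝ)) * f (x, τ)) ∂μ
          + ∫⁻ x, (∫⁻ τ in Ioi (-a x),
            ENNReal.ofReal ((1 + (τ + a x) ^ 2) ^ ((2 * s - 1) / 4)) * f (x, τ)) ∂μ) := by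
  have hmeas : Measurable fun x ↦ ∫⁻ τ in Ioi (-a x),
      ENNReal.ofReal ((1 + (τ + a x) ^ 2) ^ ((2 * s - 1) / 4)) * f (x, τ) :=
    measurable_lintegral_Ioi ha.neg (f := fun z ↦
      ENNReal.ofReal ((1 + (z.2 + a z.1) ^ 2) ^ ((2 * s - 1) / 4)) * f z) (by fun_prop)
  rw [← lintegral_add_right _ hmeas, ← lintegral_const_mul' _ _ ENNReal.ofReal_ne_top]
  exact lintegral_mono fun x ↦
    lintegral_robin_weight_le (hp x) hγ s (a x) (g := fun τ ↦ f (x, τ)) (by fun_prop)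

/-- Weighted integral inequality for the non-oscillatory boundary term of the Robin problem. -/
theorem robin_nonoscillatory_weighted_inequality (s γ : ℝ) (hs : 0 ≤ s) (hγ : γ ≠ 0) :
    ∃ C : ℝ, 0 < C ∧ ∀ G : ℝ × ℝ → ℂ, Measurable G →
      (∫⁻ k₁ : ℝ, ∫⁻ k₂ in Ioi (0:ℝ),
          ENNReal.ofReal ((1 + k₁^2 + k₂^2) ^ s * (k₂^2 / (k₂^2 + γ^2)))
            * (‖G (k₁, -k₁^2 + k₂^2)‖₊ : ℝ≥0∞) ^ 2)
      ≤ ENNReal.ofReal C *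
        ((∫⁻ k₁ : ℝ, ENNReal.ofReal ((1 + k₁^2) ^ s) *
            ∫⁻ τ in Ioi (-k₁^2),
              ENNReal.ofReal ((1 + (τ + k₁^2)^2) ^ (-(1/4) : ℝ))
                * (‖G (k₁, τ)‖₊ : ℝ≥0∞) ^ 2)
         + (∫⁻ k₁ : ℝ, ∫⁻ τ in Ioi (-k₁^2),
              ENNReal.ofReal ((1 + (τ + k₁^2)^2) ^ ((2*s - 1)/4))
                * (‖G (k₁, τ)‖₊ : ℝ≥0∞) ^ 2)) :=
  ⟨2 ^ |s| * (1 + 1 / γ ^ 2), by positivity, fun G hG ↦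
    robin_nonoscillatory_weighted_inequality_general volume s hγ
      (p := fun k₁ ↦ 1 + k₁ ^ 2) (a := fun k₁ ↦ k₁ ^ 2) (f := fun z ↦ (‖G z‖₊ : ℝ≥0∞) ^ 2)
      (fun _ ↦ by positivity) (by fun_prop) (by fun_prop)⟩
end

section
/- (Two-sided bound for the multiplier on the semicircle.) Let γ > 0, θ ∈ [-π/2, π/2], and set k₂ = iγ + (γ/2)e^{iθ} ∈ ℂ. Then (1 - e^{-2})/(1 + 9γ²/4) ≤ | (1 - e^{2(ik₂² - 1)}) / (1 - ik₂²) | ≤ (1 + e^{-2}) / (1 + γ⁴/16)^{1/2}. -/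
open Complex

/-!
With `w = i k²`, the multiplier is `(1 - e^{T(w-1)}) / (1 - w)`. If `Re w ≤ 0`, then `e^{T(w-1)}`
has modulus at most `e^{-T}`, while `1` and `w` form an obtuse angle, so that `|1 - w|` lies between
`(1 + |w|²)^{1/2}` and `1 + |w|`. On the semicircle `k = γ u`, where `u = i + ρ e^{iθ}` with
`0 ≤ ρ ≤ 1` lies in the closed first quadrant, we have `Im k² = γ² Im u² ≥ 0`, i.e. `Re w ≤ 0`, and
`|w| = γ² |u|²` lies between `γ² (1 - ρ)²` and `γ² (1 + ρ)²` by the triangle inequality.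
-/

theorem sqrt_norm_sq_add_norm_sq_le_norm_sub {E : Type*} [SeminormedAddCommGroup E]
    [InnerProductSpace ℝ E] {x y : E} (hxy : inner ℝ x y ≤ 0) :
    √(‖x‖ ^ 2 + ‖y‖ ^ 2) ≤ ‖x - y‖ := by
  rw [Real.sqrt_le_left (norm_nonneg _), norm_sub_sq_real]
  linarith

section Multiplier

variable {T : ℝ} {w : ℂ}

theorem norm_exp_mul_sub_one_le (hT : 0 ≤ T) (hw : w.re ≤ 0) :
    ‖exp (T * (w - 1))‖ ≤ Real.exp (-T) := by
  rw [norm_exp, re_ofReal_mul, sub_re, one_re, Real.exp_le_exp]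
  linarith [mul_nonpos_of_nonneg_of_nonpos hT hw]

theorem sqrt_one_add_norm_sq_le_norm_one_sub (hw : w.re ≤ 0) : √(1 + ‖w‖ ^ 2) ≤ ‖1 - w‖ := by
  have inner_nonpos : inner ℝ (1 : ℂ) w ≤ 0 := by simpa [Complex.inner] using hw
  simpa using sqrt_norm_sq_add_norm_sq_le_norm_sub inner_nonpos

theorem one_sub_exp_div_le_norm_multiplier (hT : 0 ≤ T) (hw : w.re ≤ 0) :
    (1 - Real.exp (-T)) / (1 + ‖w‖) ≤ ‖(1 - exp (T * (w - 1))) / (1 - w)‖ := by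
  have denom_pos : 0 < ‖1 - w‖ :=
    (Real.sqrt_pos.2 (by positivity)).trans_le (sqrt_one_add_norm_sq_le_norm_one_sub hw)
  have denom_le : ‖1 - w‖ ≤ 1 + ‖w‖ := by simpa using norm_sub_le 1 w
  have le_num : 1 - Real.exp (-T) ≤ ‖1 - exp (T * (w - 1))‖ := calc
    1 - Real.exp (-T) ≤ ‖(1 : ℂ)‖ - ‖exp (T * (w - 1))‖ := by
      rw [norm_one]; gcongr; exact norm_exp_mul_sub_one_le hT hw
    _ ≤ ‖1 - exp (T * (w - 1))‖ := norm_sub_norm_le _ _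
  rw [norm_div]
  exact div_le_div₀ (norm_nonneg _) le_num denom_pos denom_le

theorem norm_multiplier_le_one_add_exp_div (hT : 0 ≤ T) (hw : w.re ≤ 0) :
    ‖(1 - exp (T * (w - 1))) / (1 - w)‖ ≤ (1 + Real.exp (-T)) / √(1 + ‖w‖ ^ 2) := by
  have num_le : ‖1 - exp (T * (w - 1))‖ ≤ 1 + Real.exp (-T) := calc
    ‖1 - exp (T * (w - 1))‖ ≤ ‖(1 : ℂ)‖ + ‖exp (T * (w - 1))‖ := norm_sub_le _ _
    _ ≤ 1 + Real.exp (-T) := by rw [norm_one]; gcongr; exact norm_exp_mul_sub_one_le hT hw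
  rw [norm_div]
  exact div_le_div₀ (by positivity) num_le (Real.sqrt_pos.2 (by positivity))
    (sqrt_one_add_norm_sq_le_norm_one_sub hw)

end Multiplier

section Semicircle

variable {ρ θ : ℝ}

theorem norm_I_add_mul_exp_le (hρ : 0 ≤ ρ) : ‖I + ρ * exp (I * θ)‖ ≤ 1 + ρ := by
  simpa [norm_exp_I_mul_ofReal, abs_of_nonneg hρ] using norm_add_le I (ρ * exp (I * θ))

theorem one_sub_le_norm_I_add_mul_exp (hρ : 0 ≤ ρ) : 1 - ρ ≤ ‖I + ρ * exp (I * θ)‖ := by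
  simpa [norm_exp_I_mul_ofReal, abs_of_nonneg hρ] using norm_sub_le_norm_add I (ρ * exp (I * θ))

theorem im_sq_I_add_mul_exp_nonneg (hρ : ρ ∈ Set.Icc 0 1) (hθ : 0 ≤ Real.cos θ) :
    0 ≤ ((I + ρ * exp (I * θ)) ^ 2).im := by
  have re_eq : (I + ρ * exp (I * θ)).re = ρ * Real.cos θ := by
    simp [mul_comm I, exp_ofReal_mul_I_re]
  have im_eq : (I + ρ * exp (I * θ)).im = 1 + ρ * Real.sin θ := by
    simp [mul_comm I, exp_ofReal_mul_I_im]
  have re_nonneg : 0 ≤ ρ * Real.cos θ := mul_nonneg hρ.1 hθ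
  have im_nonneg : 0 ≤ 1 + ρ * Real.sin θ := by
    linarith [mul_le_mul_of_nonneg_left (Real.neg_one_le_sin θ) hρ.1, hρ.2]
  rw [sq, mul_im, re_eq, im_eq]
  positivity

end Semicircle

theorem semicircle_multiplier_two_sided_bound_general {T ρ θ : ℝ} (hT : 0 ≤ T)
    (hρ : ρ ∈ Set.Icc 0 1) (hθ : θ ∈ Set.Icc (-(Real.pi / 2)) (Real.pi / 2)) (γ : ℝ) {k : ℂ}
    (hk : k = γ * (I + ρ * exp (I * θ))) :
    (1 - Real.exp (-T)) / (1 + γ ^ 2 * (1 + ρ) ^ 2)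
        ≤ ‖(1 - exp (T * (I * k ^ 2 - 1))) / (1 - I * k ^ 2)‖
      ∧ ‖(1 - exp (T * (I * k ^ 2 - 1))) / (1 - I * k ^ 2)‖
        ≤ (1 + Real.exp (-T)) / √(1 + γ ^ 4 * (1 - ρ) ^ 4) := by
  have re_nonpos : (I * k ^ 2).re ≤ 0 := by
    rw [I_mul_re, neg_nonpos, hk, mul_pow, ← ofReal_pow, im_ofReal_mul]
    exact mul_nonneg (sq_nonneg γ)
      (im_sq_I_add_mul_exp_nonneg hρ (Real.cos_nonneg_of_mem_Icc hθ))
  have norm_eq : ‖I * k ^ 2‖ = γ ^ 2 * ‖I + ρ * exp (I * θ)‖ ^ 2 := by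
    rw [norm_mul, norm_I, one_mul, norm_pow, hk, norm_mul, norm_real, mul_pow, Real.norm_eq_abs,
      sq_abs]
  have norm_le : ‖I * k ^ 2‖ ≤ γ ^ 2 * (1 + ρ) ^ 2 := by
    rw [norm_eq]; gcongr; exact norm_I_add_mul_exp_le hρ.1
  have le_norm : γ ^ 2 * (1 - ρ) ^ 2 ≤ ‖I * k ^ 2‖ := by
    have one_sub_nonneg : 0 ≤ 1 - ρ := sub_nonneg.2 hρ.2
    rw [norm_eq]; gcongr; exact one_sub_le_norm_I_add_mul_exp hρ.1
  constructor
  · refine le_trans ?_ (one_sub_exp_div_le_norm_multiplier hT re_nonpos)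
    have num_nonneg : 0 ≤ 1 - Real.exp (-T) := by simpa using hT
    gcongr
  · refine (norm_multiplier_le_one_add_exp_div hT re_nonpos).trans ?_
    have pow_four_eq : γ ^ 4 * (1 - ρ) ^ 4 = (γ ^ 2 * (1 - ρ) ^ 2) ^ 2 := by ring
    rw [pow_four_eq]
    gcongr

/-- Two-sided bound for the multiplier ψ̂(-k₂²) = (1-e^{2(ik₂²-1)})/(1-ik₂²) on the
semicircle k₂ = iγ + (γ/2)e^{iθ}, θ ∈ [-π/2, π/2], for γ > 0. -/
theorem semicircle_multiplier_two_sided_bound (γ θ : ℝ) (hγ : 0 < γ)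
    (hθ : θ ∈ Set.Icc (-(Real.pi/2)) (Real.pi/2))
    (k₂ : ℂ) (hk₂ : k₂ = Complex.I * (γ:ℂ) + ((γ:ℂ)/2) * Complex.exp (Complex.I * (θ:ℂ))) :
    (1 - Real.exp (-2)) / (1 + 9*γ^2/4)
        ≤ ‖(1 - Complex.exp (2 * (Complex.I * k₂^2 - 1))) / (1 - Complex.I * k₂^2)‖
      ∧ ‖(1 - Complex.exp (2 * (Complex.I * k₂^2 - 1))) / (1 - Complex.I * k₂^2)‖
        ≤ (1 + Real.exp (-2)) / Real.sqrt (1 + γ^4/16) := by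
  have hk : k₂ = γ * (I + (1 / 2 : ℝ) * exp (I * θ)) := by rw [hk₂]; push_cast; ring
  convert semicircle_multiplier_two_sided_bound_general zero_le_two (by norm_num) hθ γ hk using 4
    <;> norm_num <;> ring
end

section
/- (Bounds on |1 - ik₂²| on the semicircle.) Let γ > 0 and θ ∈ [-π/2, π/2], and set k₂ = iγ + (γ/2)e^{iθ} ∈ ℂ. Then (1 + γ⁴/16)^{1/2} ≤ |1 - ik₂²| ≤ 1 + 9γ²/4. -/
/-!
Since `-ik²` has real part `2 (re k) (im k)` and modulus `|k|²`,
`|1 - ik²|² = 1 + 4 (re k) (im k) + |k|⁴`. Hence `|1 - ik²| ≥ √(1 + |k|⁴)` on the closed first and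
third quadrants, while `|1 - ik²| ≤ 1 + |k|²` everywhere. The semicircle stays in one of these
quadrants, and on it `|γ|/2 ≤ |k| ≤ 3|γ|/2` by the triangle inequality.
-/

open Complex

theorem sq_norm_one_sub_I_mul_sq (k : ℂ) :
    ‖1 - I * k ^ 2‖ ^ 2 = 1 + 4 * (k.re * k.im) + ‖k‖ ^ 4 := by
  have norm_pow_four : ‖k‖ ^ 4 = (k.re * k.re + k.im * k.im) ^ 2 := by
    rw [← normSq_apply, ← Complex.sq_norm, ← pow_mul]
  rw [norm_pow_four, Complex.sq_norm, normSq_apply]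
  simp only [sub_re, sub_im, one_re, one_im, mul_re, mul_im, I_re, I_im, pow_two]
  ring

theorem sqrt_one_add_norm_pow_four_le_norm_one_sub_I_mul_sq {k : ℂ}
    (hk : 0 ≤ k.re * k.im) :
    √(1 + ‖k‖ ^ 4) ≤ ‖1 - I * k ^ 2‖ := by
  refine Real.sqrt_le_iff.mpr ⟨norm_nonneg _, ?_⟩
  rw [sq_norm_one_sub_I_mul_sq]
  linarith

theorem norm_one_sub_I_mul_sq_le (k : ℂ) : ‖1 - I * k ^ 2‖ ≤ 1 + ‖k‖ ^ 2 :=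
  calc
    ‖1 - I * k ^ 2‖ ≤ ‖(1 : ℂ)‖ + ‖I * k ^ 2‖ := norm_sub_le _ _
    _ = 1 + ‖k‖ ^ 2 := by simp

theorem norm_circleMap_le (c : ℂ) (R θ : ℝ) : ‖circleMap c R θ‖ ≤ ‖c‖ + |R| :=
  norm_le_norm_add_const_of_dist_le (circleMap_mem_sphere' c R θ).le

theorem norm_sub_abs_le_norm_circleMap (c : ℂ) (R θ : ℝ) : ‖c‖ - |R| ≤ ‖circleMap c R θ‖ :=
  sub_le_iff_le_add.mpr <|
    norm_le_norm_add_const_of_dist_le (Metric.mem_sphere'.mp (circleMap_mem_sphere' c R θ)).le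

theorem re_mul_im_circleMap_I_mul_nonneg {γ R θ : ℝ} (hR : R ^ 2 ≤ γ * R)
    (hcos : 0 ≤ Real.cos θ) :
    0 ≤ (circleMap (I * γ) R θ).re * (circleMap (I * γ) R θ).im := by
  have re_eq : (circleMap (I * γ) R θ).re = R * Real.cos θ := by simp [circleMap]
  have im_eq : (circleMap (I * γ) R θ).im = γ + R * Real.sin θ := by simp [circleMap]
  have mul_im_nonneg : 0 ≤ R * (γ + R * Real.sin θ) :=
    calc
      0 ≤ R ^ 2 * (1 + Real.sin θ) :=
        mul_nonneg (sq_nonneg R) (by linarith [Real.neg_one_le_sin θ])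
      _ ≤ R * (γ + R * Real.sin θ) := by linarith
  rw [re_eq, im_eq, mul_right_comm]
  exact mul_nonneg mul_im_nonneg hcos

theorem semicircle_denominator_bounds_general (γ θ : ℝ)
    (hθ : θ ∈ Set.Icc (-(Real.pi / 2)) (Real.pi / 2))
    (k₂ : ℂ) (hk₂ : k₂ = I * (γ : ℂ) + ((γ : ℂ) / 2) * exp (I * (θ : ℂ))) :
    √(1 + γ ^ 4 / 16) ≤ ‖1 - I * k₂ ^ 2‖ ∧ ‖1 - I * k₂ ^ 2‖ ≤ 1 + 9 * γ ^ 2 / 4 := by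
  have k₂_eq_circleMap : k₂ = circleMap (I * γ) (γ / 2) θ := by
    simp [hk₂, circleMap, mul_comm I (θ : ℂ)]
  have norm_center : ‖I * (γ : ℂ)‖ = |γ| := by simp
  have abs_radius : |γ / 2| = |γ| / 2 := by simp [abs_div]
  have le_norm : |γ| / 2 ≤ ‖k₂‖ := by
    rw [k₂_eq_circleMap]
    linarith [norm_sub_abs_le_norm_circleMap (I * γ) (γ / 2) θ]
  have norm_le : ‖k₂‖ ≤ 3 * |γ| / 2 := by
    rw [k₂_eq_circleMap]
    linarith [norm_circleMap_le (I * γ) (γ / 2) θ]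
  have re_mul_im_nonneg : 0 ≤ k₂.re * k₂.im := by
    rw [k₂_eq_circleMap]
    exact re_mul_im_circleMap_I_mul_nonneg (by nlinarith) (Real.cos_nonneg_of_mem_Icc hθ)
  constructor
  · calc
      √(1 + γ ^ 4 / 16) = √(1 + (|γ| / 2) ^ 4) := by
        rw [div_pow, Even.pow_abs ⟨2, rfl⟩]; norm_num
      _ ≤ √(1 + ‖k₂‖ ^ 4) := by gcongr
      _ ≤ ‖1 - I * k₂ ^ 2‖ :=
        sqrt_one_add_norm_pow_four_le_norm_one_sub_I_mul_sq re_mul_im_nonneg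
  · calc
      ‖1 - I * k₂ ^ 2‖ ≤ 1 + ‖k₂‖ ^ 2 := norm_one_sub_I_mul_sq_le k₂
      _ ≤ 1 + (3 * |γ| / 2) ^ 2 := by gcongr
      _ = 1 + 9 * γ ^ 2 / 4 := by rw [div_pow, mul_pow, sq_abs]; norm_num

/-- Bounds on |1 - ik₂²| on the semicircle k₂ = iγ + (γ/2)e^{iθ},
θ ∈ [-π/2, π/2], for γ > 0. -/
theorem semicircle_denominator_bounds (γ θ : ℝ) (hγ : 0 < γ)
    (hθ : θ ∈ Set.Icc (-(Real.pi/2)) (Real.pi/2))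
    (k₂ : ℂ) (hk₂ : k₂ = Complex.I * (γ:ℂ) + ((γ:ℂ)/2) * Complex.exp (Complex.I * (θ:ℂ))) :
    Real.sqrt (1 + γ^4/16) ≤ ‖1 - Complex.I * k₂^2‖
      ∧ ‖1 - Complex.I * k₂^2‖ ≤ 1 + 9*γ^2/4 :=
  semicircle_denominator_bounds_general γ θ hθ k₂ hk₂
end

section
/- (Kernel bound on the semicircle.) Let γ > 0 and β ∈ (0,1). There exists a constant C = C(γ,β) > 0 such that for every k₁ ∈ ℝ and every θ ∈ [-π/2, π/2], with k₂ = iγ + (γ/2)e^{iθ} ∈ ℂ, ∫_{z₁∈ℝ} ∫_{z₂=0}^∞ |e^{i k₁ z₁ + i k₂ z₂} - 1|² / (z₁² + z₂²)^{1+β} dz₂ dz₁ ≤ C · max{1, |k₁|^{2β}}. -/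
open MeasureTheory Set
open scoped ENNReal NNReal

/-!
For `Im k₂ ≥ 0` and `z₂ > 0` the exponent `w = i k₁ z₁ + i k₂ z₂` has nonpositive real part, so
`|e^w - 1|² ≤ 4 min(1, |w|²)`, and `|w|² ≤ a (z₁² + z₂²)` with `a = k₁² + |k₂|²` by Cauchy–Schwarz.
The integrand is thus dominated by a function of `t = z₁² + z₂²` alone, and polar coordinates
reduce the double integral to `π ∫₀^∞ 4 min(1, a t) t^(-1-β) dt`, which is a multiple of `a ^ β`.
On the semicircle `|k₂|` is bounded, so `a ^ β` is at most a multiple of `max(1, |k₁|^(2β))`.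
-/

theorem lintegral_Ioc_zero_rpow {s b : ℝ} (hs : -1 < s) (hb : 0 ≤ b) :
    ∫⁻ t in Ioc 0 b, ENNReal.ofReal (t ^ s) = ENNReal.ofReal (b ^ (s + 1) / (s + 1)) := by
  have integrable : IntegrableOn (fun t : ℝ => t ^ s) (Ioc 0 b) :=
    (intervalIntegrable_iff_integrableOn_Ioc_of_le hb).mp
      (intervalIntegral.intervalIntegrable_rpow' hs)
  have nonneg : 0 ≤ᵐ[volume.restrict (Ioc 0 b)] fun t : ℝ => t ^ s := by
    filter_upwards [ae_restrict_mem measurableSet_Ioc] with t ht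
    exact Real.rpow_nonneg ht.1.le s
  rw [← ofReal_integral_eq_lintegral_ofReal integrable nonneg,
    ← intervalIntegral.integral_of_le hb, integral_rpow (Or.inl hs),
    Real.zero_rpow (by linarith), sub_zero]

theorem lintegral_Ioi_rpow_of_lt {s c : ℝ} (hs : s < -1) (hc : 0 < c) :
    ∫⁻ t in Ioi c, ENNReal.ofReal (t ^ s) = ENNReal.ofReal (-c ^ (s + 1) / (s + 1)) := by
  have nonneg : 0 ≤ᵐ[volume.restrict (Ioi c)] fun t : ℝ => t ^ s := by
    filter_upwards [ae_restrict_mem measurableSet_Ioi] with t ht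
    exact Real.rpow_nonneg (hc.trans ht).le s
  rw [← ofReal_integral_eq_lintegral_ofReal (integrableOn_Ioi_rpow_of_lt hs hc) nonneg,
    integral_Ioi_rpow_of_lt hs hc]

section TruncatedPower

variable {a β : ℝ}

theorem setLIntegral_Ioc_min_one_mul_div_rpow (ha : 0 < a) (hβ : β < 1) :
    ∫⁻ t in Ioc 0 a⁻¹, ENNReal.ofReal (min 1 (a * t) / t ^ (1 + β)) =
      ENNReal.ofReal (a ^ β * (1 - β)⁻¹) := by
  calc
    _ = ∫⁻ t in Ioc 0 a⁻¹, ENNReal.ofReal a * ENNReal.ofReal (t ^ (-β)) := by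
      refine setLIntegral_congr_fun measurableSet_Ioc fun t ht => ?_
      have ht_le : a * t ≤ 1 := (le_inv_mul_iff₀ ha).mp (by simpa using ht.2)
      have ht_ne : t ^ β ≠ 0 := (Real.rpow_pos_of_pos ht.1 β).ne'
      have ht_ne' : t ≠ 0 := ht.1.ne'
      rw [← ENNReal.ofReal_mul ha.le]
      congr 1
      rw [min_eq_right ht_le, Real.rpow_add ht.1, Real.rpow_one, Real.rpow_neg ht.1.le]
      field_simp
    _ = ENNReal.ofReal (a * (a⁻¹ ^ (-β + 1) / (-β + 1))) := by
      rw [lintegral_const_mul' _ _ ENNReal.ofReal_ne_top,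
        lintegral_Ioc_zero_rpow (by linarith) (inv_nonneg.mpr ha.le), ENNReal.ofReal_mul ha.le]
    _ = _ := by
      congr 1
      rw [neg_add_eq_sub, Real.inv_rpow ha.le, Real.rpow_sub ha, Real.rpow_one]
      field_simp

theorem setLIntegral_Ioi_min_one_mul_div_rpow (ha : 0 < a) (hβ : 0 < β) :
    ∫⁻ t in Ioi a⁻¹, ENNReal.ofReal (min 1 (a * t) / t ^ (1 + β)) =
      ENNReal.ofReal (a ^ β * β⁻¹) := by
  have ha' : 0 < a⁻¹ := inv_pos.mpr ha
  calc
    _ = ∫⁻ t in Ioi a⁻¹, ENNReal.ofReal (t ^ (-(1 + β))) := by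
      refine setLIntegral_congr_fun measurableSet_Ioi fun t ht => ?_
      have ht_le : 1 ≤ a * t := ((inv_lt_iff_one_lt_mul₀' ha).mp ht).le
      simp only [min_eq_left ht_le, one_div, Real.rpow_neg (ha'.trans ht).le]
    _ = _ := by
      rw [lintegral_Ioi_rpow_of_lt (by linarith) ha', show -(1 + β) + 1 = -β by ring,
        Real.inv_rpow ha.le, Real.rpow_neg ha.le, inv_inv, neg_div_neg_eq, div_eq_mul_inv]

theorem setLIntegral_Ioi_zero_min_one_mul_div_rpow (ha : 0 ≤ a) (hβ : β ∈ Ioo (0 : ℝ) 1) :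
    ∫⁻ t in Ioi 0, ENNReal.ofReal (min 1 (a * t) / t ^ (1 + β)) =
      ENNReal.ofReal (a ^ β * ((1 - β)⁻¹ + β⁻¹)) := by
  obtain ⟨hβ0, hβ1⟩ := hβ
  rcases ha.eq_or_lt with rfl | ha
  · simp [Real.zero_rpow hβ0.ne']
  have : 0 < 1 - β := sub_pos.mpr hβ1
  rw [← Ioc_union_Ioi_eq_Ioi (inv_nonneg.mpr ha.le),
    lintegral_union measurableSet_Ioi (Ioc_disjoint_Ioi le_rfl),
    setLIntegral_Ioc_min_one_mul_div_rpow ha hβ1, setLIntegral_Ioi_min_one_mul_div_rpow ha hβ0,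
    ← ENNReal.ofReal_add (by positivity) (by positivity), mul_add]

end TruncatedPower

theorem lintegral_Ioi_two_mul_comp_sq (f : ℝ → ℝ≥0∞) :
    ∫⁻ r in Ioi (0 : ℝ), ENNReal.ofReal (2 * r) * f (r ^ 2) = ∫⁻ t in Ioi (0 : ℝ), f t := by
  have image_sq : (fun r : ℝ => r ^ 2) '' Ioi 0 = Ioi 0 := by
    ext t
    exact ⟨fun ⟨r, hr, hrt⟩ => hrt ▸ pow_pos (mem_Ioi.mp hr) 2,
      fun ht => ⟨√t, Real.sqrt_pos.mpr ht, Real.sq_sqrt ht.le⟩⟩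
  have monotone_sq : MonotoneOn (fun r : ℝ => r ^ 2) (Ioi 0) :=
    fun _ hr _ _ hrs => pow_le_pow_left₀ (le_of_lt hr) hrs 2
  have deriv_sq (r : ℝ) : HasDerivWithinAt (fun r : ℝ => r ^ 2) (2 * r) (Ioi 0) r := by
    simpa using (hasDerivAt_pow 2 r).hasDerivWithinAt
  rw [← lintegral_image_eq_lintegral_deriv_mul_of_monotoneOn measurableSet_Ioi
    (fun r _ => deriv_sq r) monotone_sq, image_sq]

theorem lintegral_lintegral_comp_sq_add_sq {f : ℝ → ℝ≥0∞} (hf : Measurable f) :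
    ∫⁻ x : ℝ, ∫⁻ y : ℝ, f (x ^ 2 + y ^ 2) =
      ENNReal.ofReal Real.pi * ∫⁻ t in Ioi (0 : ℝ), f t := by
  calc
    _ = ∫⁻ p : ℝ × ℝ, f (p.1 ^ 2 + p.2 ^ 2) := by
      rw [Measure.volume_eq_prod, lintegral_prod _ (by fun_prop)]
    _ = ∫⁻ p in Ioi (0 : ℝ) ×ˢ Ioo (-Real.pi) Real.pi, ENNReal.ofReal p.1 * f (p.1 ^ 2) := by
      rw [← lintegral_comp_polarCoord_symm, polarCoord_target]
      simp only [polarCoord_symm_apply, mul_pow, ← mul_add, Real.cos_sq_add_sin_sq, mul_one,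
        smul_eq_mul]
    _ = ∫⁻ r in Ioi (0 : ℝ), ENNReal.ofReal Real.pi * (ENNReal.ofReal (2 * r) * f (r ^ 2)) := by
      rw [Measure.volume_eq_prod, ← Measure.prod_restrict, lintegral_prod _ (by fun_prop)]
      refine setLIntegral_congr_fun measurableSet_Ioi fun r _ => ?_
      have length_mul : ENNReal.ofReal r * ENNReal.ofReal (Real.pi - -Real.pi) =
          ENNReal.ofReal Real.pi * ENNReal.ofReal (2 * r) := by
        rw [← ENNReal.ofReal_mul' (by linarith [Real.pi_pos]), ← ENNReal.ofReal_mul Real.pi_nonneg]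
        congr 1
        ring
      simp only [lintegral_const, Measure.restrict_apply_univ, Real.volume_Ioo]
      rw [mul_right_comm, length_mul, mul_assoc]
    _ = _ := by
      rw [lintegral_const_mul' _ _ ENNReal.ofReal_ne_top, lintegral_Ioi_two_mul_comp_sq]

theorem norm_exp_sub_one_sq_le_four_mul_min {w : ℂ} (hw : w.re ≤ 0) :
    ‖Complex.exp w - 1‖ ^ 2 ≤ 4 * min 1 (‖w‖ ^ 2) := by
  have norm_le_two : ‖Complex.exp w - 1‖ ≤ 2 := by
    calc
      _ ≤ ‖Complex.exp w‖ + ‖(1 : ℂ)‖ := norm_sub_le _ _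
      _ ≤ 1 + 1 := by
        rw [Complex.norm_exp, norm_one]
        gcongr
        exact Real.exp_le_one_iff.mpr hw
      _ = 2 := one_add_one_eq_two
  have norm_le_two_mul : ‖Complex.exp w - 1‖ ≤ 2 * ‖w‖ := by
    rcases le_total ‖w‖ 1 with h | h
    · exact Complex.norm_exp_sub_one_le h
    · linarith
  rw [mul_min_of_nonneg _ _ zero_le_four, le_min_iff]
  constructor
  · calc
      _ ≤ (2 : ℝ) ^ 2 := by gcongr
      _ = 4 * 1 := by norm_num
  · calc
      _ ≤ (2 * ‖w‖) ^ 2 := by gcongr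
      _ = 4 * ‖w‖ ^ 2 := by ring

theorem norm_mul_add_mul_sq_le {R : Type*} [NonUnitalSeminormedRing R] (a b x y : R) :
    ‖a * x + b * y‖ ^ 2 ≤ (‖a‖ ^ 2 + ‖b‖ ^ 2) * (‖x‖ ^ 2 + ‖y‖ ^ 2) := by
  calc
    _ ≤ (‖a‖ * ‖x‖ + ‖b‖ * ‖y‖) ^ 2 := by
      gcongr
      exact norm_add_le_of_le (norm_mul_le a x) (norm_mul_le b y)
    _ ≤ _ := by linarith [sq_nonneg (‖a‖ * ‖y‖ - ‖b‖ * ‖x‖)]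

theorem norm_exp_I_mul_sub_one_sq_le {k₁ z₁ z₂ : ℝ} {k₂ : ℂ} (hk₂ : 0 ≤ k₂.im) (hz₂ : 0 ≤ z₂) :
    ‖Complex.exp (Complex.I * k₁ * z₁ + Complex.I * k₂ * z₂) - 1‖ ^ 2 ≤
      4 * min 1 ((k₁ ^ 2 + ‖k₂‖ ^ 2) * (z₁ ^ 2 + z₂ ^ 2)) := by
  have re_nonpos : (Complex.I * k₁ * z₁ + Complex.I * k₂ * z₂).re ≤ 0 := by
    simpa using mul_nonneg hk₂ hz₂
  have norm_sq_le : ‖Complex.I * k₁ * z₁ + Complex.I * k₂ * z₂‖ ^ 2 ≤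
      (k₁ ^ 2 + ‖k₂‖ ^ 2) * (z₁ ^ 2 + z₂ ^ 2) := by
    simpa using norm_mul_add_mul_sq_le (Complex.I * k₁) (Complex.I * k₂) (z₁ : ℂ) z₂
  exact (norm_exp_sub_one_sq_le_four_mul_min re_nonpos).trans (by gcongr)

theorem lintegral_halfPlane_norm_exp_sub_one_sq_div_le {β : ℝ} (hβ : β ∈ Ioo (0 : ℝ) 1)
    (k₁ : ℝ) {k₂ : ℂ} (hk₂ : 0 ≤ k₂.im) :
    ∫⁻ z₁ : ℝ, ∫⁻ z₂ in Ioi (0 : ℝ), ENNReal.ofReal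
        (‖Complex.exp (Complex.I * k₁ * z₁ + Complex.I * k₂ * z₂) - 1‖ ^ 2 /
          (z₁ ^ 2 + z₂ ^ 2) ^ (1 + β)) ≤
      ENNReal.ofReal (4 * Real.pi * ((1 - β)⁻¹ + β⁻¹) * (k₁ ^ 2 + ‖k₂‖ ^ 2) ^ β) := by
  set a : ℝ := k₁ ^ 2 + ‖k₂‖ ^ 2
  have ha : 0 ≤ a := by positivity
  let majorant (t : ℝ) : ℝ≥0∞ := 4 * ENNReal.ofReal (min 1 (a * t) / t ^ (1 + β))
  calc
    _ ≤ ∫⁻ z₁ : ℝ, ∫⁻ z₂ : ℝ, majorant (z₁ ^ 2 + z₂ ^ 2) := by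
      refine lintegral_mono fun z₁ => le_trans ?_ (setLIntegral_le_lintegral (Ioi 0) _)
      refine setLIntegral_mono' measurableSet_Ioi fun z₂ hz₂ => ?_
      dsimp only [majorant]
      rw [← ENNReal.ofReal_ofNat 4, ← ENNReal.ofReal_mul zero_le_four, ← mul_div_assoc]
      gcongr
      exact norm_exp_I_mul_sub_one_sq_le hk₂ (le_of_lt hz₂)
    _ = ENNReal.ofReal Real.pi * (4 * ENNReal.ofReal (a ^ β * ((1 - β)⁻¹ + β⁻¹))) := by
      rw [lintegral_lintegral_comp_sq_add_sq (by fun_prop),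
        lintegral_const_mul' _ _ ENNReal.ofNat_ne_top,
        setLIntegral_Ioi_zero_min_one_mul_div_rpow ha hβ]
    _ = _ := by
      rw [← ENNReal.ofReal_ofNat 4, ← ENNReal.ofReal_mul zero_le_four,
        ← ENNReal.ofReal_mul Real.pi_nonneg]
      congr 1
      ring

theorem sq_add_sq_rpow_le_mul_max {β x y R : ℝ} (hβ : 0 ≤ β) (hy : |y| ≤ R) :
    (x ^ 2 + y ^ 2) ^ β ≤ (1 + R ^ 2) ^ β * max 1 (|x| ^ (2 * β)) := by
  have sq_add_sq_le : x ^ 2 + y ^ 2 ≤ (1 + R ^ 2) * max 1 (x ^ 2) := by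
    have y_sq_le : y ^ 2 ≤ R ^ 2 * max 1 (x ^ 2) :=
      (sq_le_sq.mpr (hy.trans (le_abs_self R))).trans
        (le_mul_of_one_le_right (sq_nonneg R) (le_max_left _ _))
    linarith [le_max_right 1 (x ^ 2)]
  calc
    _ ≤ ((1 + R ^ 2) * max 1 (x ^ 2)) ^ β := by gcongr
    _ = _ := by
      rw [Real.mul_rpow (by positivity) (by positivity),
        Real.rpow_max zero_le_one (sq_nonneg x) hβ, Real.one_rpow, ← sq_abs x,
        ← Real.rpow_natCast_mul (abs_nonneg x), Nat.cast_ofNat]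

theorem semicircle_kernel_bound_general {β : ℝ} (hβ : β ∈ Ioo (0 : ℝ) 1) (R : ℝ) :
    ∃ C : ℝ, 0 < C ∧ ∀ (k₁ : ℝ) (k₂ : ℂ), 0 ≤ k₂.im → ‖k₂‖ ≤ R →
      ∫⁻ z₁ : ℝ, ∫⁻ z₂ in Ioi (0 : ℝ), ENNReal.ofReal
          (‖Complex.exp (Complex.I * k₁ * z₁ + Complex.I * k₂ * z₂) - 1‖ ^ 2 /
            (z₁ ^ 2 + z₂ ^ 2) ^ (1 + β)) ≤
        ENNReal.ofReal (C * max 1 (|k₁| ^ (2 * β))) := by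
  have hβ0 : 0 < β := hβ.1
  have hβ1 : 0 < 1 - β := sub_pos.mpr hβ.2
  refine ⟨4 * Real.pi * ((1 - β)⁻¹ + β⁻¹) * (1 + R ^ 2) ^ β, by positivity,
    fun k₁ k₂ him hnorm => ?_⟩
  refine (lintegral_halfPlane_norm_exp_sub_one_sq_div_le hβ k₁ him).trans ?_
  rw [mul_assoc _ ((1 + R ^ 2) ^ β)]
  gcongr
  exact sq_add_sq_rpow_le_mul_max hβ0.le (by rwa [abs_norm])

section Disc

variable {γ : ℝ} {k : ℂ}

theorem im_nonneg_of_norm_sub_I_mul_le (h : ‖k - Complex.I * γ‖ ≤ γ) : 0 ≤ k.im := by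
  have im_sub_le : |k.im - γ| ≤ γ := by simpa using (Complex.abs_im_le_norm _).trans h
  linarith [neg_le_of_abs_le im_sub_le]

theorem norm_le_two_mul_of_norm_sub_I_mul_le (h : ‖k - Complex.I * γ‖ ≤ γ) : ‖k‖ ≤ 2 * γ := by
  have hγ : 0 ≤ γ := (norm_nonneg _).trans h
  calc
    ‖k‖ ≤ ‖Complex.I * γ‖ + ‖k - Complex.I * γ‖ := norm_le_norm_add_norm_sub' _ _
    _ ≤ γ + γ := by gcongr; simp [abs_of_nonneg hγ]
    _ = 2 * γ := (two_mul γ).symm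

end Disc

theorem norm_I_mul_add_half_mul_exp_sub_le {γ : ℝ} (hγ : 0 ≤ γ) (θ : ℝ) :
    ‖Complex.I * γ + γ / 2 * Complex.exp (Complex.I * θ) - Complex.I * γ‖ ≤ γ := by
  rw [add_sub_cancel_left, norm_mul, Complex.norm_exp_I_mul_ofReal, mul_one, norm_div,
    Complex.norm_of_nonneg hγ, RCLike.norm_ofNat]
  exact half_le_self hγ

/-- Kernel bound on the semicircle: the Gagliardo-type kernel integral with
k₂ = iγ + (γ/2)e^{iθ} on the right semicircle is bounded by C·max{1, |k₁|^{2β}}. -/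
theorem semicircle_kernel_bound (γ β : ℝ) (hγ : 0 < γ) (hβ : β ∈ Set.Ioo (0:ℝ) 1) :
    ∃ C : ℝ, 0 < C ∧ ∀ (k₁ θ : ℝ), θ ∈ Set.Icc (-(Real.pi/2)) (Real.pi/2) →
      (∫⁻ z₁ : ℝ, ∫⁻ z₂ in Ioi (0:ℝ),
          ENNReal.ofReal
            (‖Complex.exp (Complex.I * (k₁:ℂ) * (z₁:ℂ)
                + Complex.I
                  * (Complex.I * (γ:ℂ) + ((γ:ℂ)/2) * Complex.exp (Complex.I * (θ:ℂ)))
                  * (z₂:ℂ)) - 1‖ ^ 2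
              / (z₁^2 + z₂^2) ^ (1 + β)))
        ≤ ENNReal.ofReal (C * max 1 (|k₁| ^ (2*β))) := by
  obtain ⟨C, hC, bound⟩ := semicircle_kernel_bound_general hβ (2 * γ)
  have mem_disc := norm_I_mul_add_half_mul_exp_sub_le hγ.le
  exact ⟨C, hC, fun k₁ θ _ => bound k₁ _ (im_nonneg_of_norm_sub_I_mul_le (mem_disc θ))
    (norm_le_two_mul_of_norm_sub_I_mul_le (mem_disc θ))⟩
end

section
/- (Global relation for the forced linear Schrödinger equation on the half-plane.) Let T > 0. Suppose u, f : ℝ × [0,∞) × [0,T] → ℂ are such that: (i) for each t ∈ [0,T], the functions (x₁,x₂) ↦ u(x₁,x₂,t) and (x₁,x₂) ↦ f(x₁,x₂,t) are restrictions to ℝ × [0,∞) of Schwartz functions on ℝ²; (ii) u is continuously differentiable in t, with ∂ₜu, and all spatial derivatives of u up to second order, jointly continuous and dominated uniformly in t by an integrable function of (x₁,x₂); (iii) i ∂ₜu + ∂²_{x₁}u + ∂²_{x₂}u = f on ℝ × (0,∞) × (0,T). Define the half-plane Fourier transform û(k₁,k₂,t) = ∫_{x₁∈ℝ} ∫_{x₂=0}^∞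 e^{-ik₁x₁ - ik₂x₂} u(x₁,x₂,t) dx₂ dx₁, and similarly f̂; define the boundary transforms ĝ₀(k₁,t) = ∫_{ℝ} e^{-ik₁x₁} u(x₁,0,t) dx₁ and ĝ₁(k₁,t) = ∫_{ℝ} e^{-ik₁x₁} ∂_{x₂}u(x₁,0,t) dx₁. Then for every k₁ ∈ ℝ, every k₂ ∈ ℂ with Im(k₂) ≤ 0, and every t ∈ [0,T], e^{i(k₁²+k₂²)t} û(k₁,k₂,t) = û(k₁,k₂,0) + ∫₀^t e^{i(k₁²+k₂²)t'} [ k₂ ĝ₀(k₁,t') - i ĝ₁(k₁,t') - i f̂(k₁,k₂,t') ] dt'. -/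
open MeasureTheory Set Filter

/-!
At a fixed time, integrating by parts twice in each variable turns the transform of the Laplacian
into `-(k₁² + k₂²) û - i k₂ ĝ₀ - ĝ₁`; the only boundary terms come from `x₂ = 0`, since on almost
every line an integrable function with integrable derivative tends to zero at infinity, and
`Im k₂ ≤ 0` keeps the kernel bounded. The equation thereby becomes the linear ODE
`∂ₜû + i (k₁² + k₂²) û = k₂ ĝ₀ - i ĝ₁ - i f̂` in `t`, which is integrated with the factor
`exp (i (k₁² + k₂²) t)`. The domination of `∂ₜu` makes `û` Lipschitz in `t`, and its derivative
is bounded, hence integrable over bounded intervals.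
-/

open Function LineDeriv
open scoped SchwartzMap Topology

section Calculus

variable {E : Type*} [NormedAddCommGroup E] [NormedSpace ℂ E]

theorem integral_smul_deriv_of_hasDerivAt_const_mul {c : ℂ} {e : ℝ → ℂ} {w w' : ℝ → E}
    (he : ∀ x, HasDerivAt e (-c * e x) x) (hw : ∀ x, HasDerivAt w (w' x) x)
    (hew : Integrable fun x => e x • w x) (hew' : Integrable fun x => e x • w' x) :
    ∫ x, e x • w' x = c • ∫ x, e x • w x := by
  have hderiv (x : ℝ) : HasDerivAt (fun x => e x • w x) (e x • w' x - c • e x • w x) x :=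
    ((he x).smul (hw x)).congr_deriv (by module)
  have hcew : Integrable fun x => c • e x • w x := hew.smul c
  have hzero := integral_eq_zero_of_hasDerivAt_of_integrable hderiv (hew'.sub hcew) hew
  rwa [integral_sub hew' hcew, integral_smul, sub_eq_zero] at hzero

variable [CompleteSpace E]

theorem integral_Ioi_smul_deriv_of_hasDerivAt_const_mul {a : ℝ} {c : ℂ} {e : ℝ → ℂ} {w w' : ℝ → E}
    (he : ∀ x, HasDerivAt e (-c * e x) x) (hcont : ContinuousWithinAt w (Ici a) a)
    (hw : ∀ x ∈ Ioi a, HasDerivAt w (w' x) x)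
    (hew : IntegrableOn (fun x => e x • w x) (Ioi a))
    (hew' : IntegrableOn (fun x => e x • w' x) (Ioi a)) :
    ∫ x in Ioi a, e x • w' x = c • (∫ x in Ioi a, e x • w x) - e a • w a := by
  have hderiv : ∀ x ∈ Ioi a,
      HasDerivAt (fun x => e x • w x) (e x • w' x - c • e x • w x) x := fun x hx =>
    ((he x).smul (hw x hx)).congr_deriv (by module)
  have hcew : IntegrableOn (fun x => c • e x • w x) (Ioi a) := hew.smul c
  have hint := hew'.sub hcew
  have hftc := integral_Ioi_of_hasDerivAt_of_tendsto (f := fun x => e x • w x)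
    ((he a).continuousAt.continuousWithinAt.smul hcont) hderiv hint
    (tendsto_zero_of_hasDerivAt_of_integrableOn_Ioi hderiv hint hew)
  rw [integral_sub hew' hcew, integral_smul, zero_sub] at hftc
  rw [sub_eq_iff_eq_add.mp hftc]
  abel

theorem cexp_mul_smul_eq_add_intervalIntegral {a b : ℝ} (c : ℂ) {φ φ' : ℝ → E} (hab : a ≤ b)
    (hcont : ContinuousOn φ (Icc a b)) (hderiv : ∀ s ∈ Ioo a b, HasDerivAt φ (φ' s) s)
    (hint : IntervalIntegrable φ' volume a b) :
    Complex.exp (c * b) • φ b = Complex.exp (c * a) • φ a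
      + ∫ s in a..b, Complex.exp (c * s) • (c • φ s + φ' s) := by
  have hexp (s : ℝ) :
      HasDerivAt (fun s : ℝ => Complex.exp (c * s)) (c * Complex.exp (c * s)) s := by
    simpa [mul_comm] using (((hasDerivAt_id s).ofReal_comp).const_mul c).cexp
  have hexp_cont : Continuous fun s : ℝ => Complex.exp (c * s) := by fun_prop
  have hφ_int : IntervalIntegrable φ volume a b :=
    ContinuousOn.intervalIntegrable (by rwa [uIcc_of_le hab])
  have hderiv' : ∀ s ∈ Ioo a b, HasDerivAt (fun s : ℝ => Complex.exp (c * s) • φ s)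
      (Complex.exp (c * s) • (c • φ s + φ' s)) s := fun s hs =>
    ((hexp s).smul (hderiv s hs)).congr_deriv (by module)
  have hint' : IntervalIntegrable (fun s : ℝ => Complex.exp (c * s) • (c • φ s + φ' s))
      volume a b :=
    ((hφ_int.smul c).add hint).continuousOn_smul hexp_cont.continuousOn
  exact sub_eq_iff_eq_add'.mp (intervalIntegral.integral_eq_sub_of_hasDerivAt_of_le hab
    (hexp_cont.continuousOn.smul hcont) hderiv' hint').symm

end Calculus

section DominatedDerivative

variable {α E : Type*} [MeasurableSpace α] {μ : Measure α}
  [NormedAddCommGroup E] [NormedSpace ℝ E]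

theorem intervalIntegrable_of_hasDerivAt_of_norm_le [CompleteSpace E] {a b C : ℝ} {f f' : ℝ → E}
    (hab : a ≤ b) (hderiv : ∀ x ∈ Ioo a b, HasDerivAt f (f' x) x)
    (hbound : ∀ x ∈ Ioo a b, ‖f' x‖ ≤ C) : IntervalIntegrable f' volume a b := by
  rw [intervalIntegrable_iff_integrableOn_Ioo_of_le hab]
  have hae : deriv f =ᵐ[volume.restrict (Ioo a b)] f' := by
    filter_upwards [ae_restrict_mem measurableSet_Ioo] with x hx using (hderiv x hx).deriv
  refine IntegrableOn.congr_fun_ae (Measure.integrableOn_of_bounded measure_Ioo_lt_top.ne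
    (aestronglyMeasurable_deriv f _) (M := C) ?_) hae
  filter_upwards [hae, ae_restrict_mem measurableSet_Ioo] with x hx hmem
  exact hx ▸ hbound x hmem

theorem aestronglyMeasurable_of_hasDerivAt {F : ℝ → α → E} {G : α → E} {t : ℝ}
    (hF : ∀ᶠ s in 𝓝 t, AEStronglyMeasurable (F s) μ)
    (hderiv : ∀ᵐ a ∂μ, HasDerivAt (F · a) (G a) t) : AEStronglyMeasurable G μ := by
  obtain ⟨τ, hτ⟩ := (𝓝[≠] t).exists_seq_tendsto
  obtain ⟨N, hN⟩ := eventually_atTop.mp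
    ((tendsto_nhds_of_tendsto_nhdsWithin hτ).eventually hF)
  refine aestronglyMeasurable_of_tendsto_ae atTop
    (f := fun n a => slope (F · a) t (τ (n + N))) (fun n => ?_) ?_
  · exact ((hN _ (Nat.le_add_left N n)).sub hF.self_of_nhds).const_smul (τ (n + N) - t)⁻¹
  · filter_upwards [hderiv] with a ha
    exact ha.tendsto_slope.comp (hτ.comp (tendsto_add_atTop_nat N))

/-- The parametrised functions `F t`, for `t ∈ s`, are integrable and pointwise differentiable in
`t` along `s`, with derivatives `F' t` that admit a common integrable bound. This is the setting
for differentiating `∫ a, F t a ∂μ` under the integral sign. -/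
structure HasDominatedDerivOn (F F' : ℝ → α → E) (s : Set ℝ) (μ : Measure α) : Prop where
  integrable : ∀ t ∈ s, Integrable (F t) μ
  hasDerivWithinAt : ∀ᵐ a ∂μ, ∀ t ∈ s, HasDerivWithinAt (F · a) (F' t a) s t
  exists_bound : ∃ bound : α → ℝ, Integrable bound μ ∧ ∀ᵐ a ∂μ, ∀ t ∈ s, ‖F' t a‖ ≤ bound a

namespace HasDominatedDerivOn

variable {F F' : ℝ → α → E} {s : Set ℝ} {t : ℝ}

theorem mono {r : Set ℝ} (h : HasDominatedDerivOn F F' s μ) (hr : r ⊆ s) :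
    HasDominatedDerivOn F F' r μ where
  integrable t ht := h.integrable t (hr ht)
  hasDerivWithinAt := by
    filter_upwards [h.hasDerivWithinAt] with a ha t ht using (ha t (hr ht)).mono hr
  exists_bound := by
    obtain ⟨bound, hbound_int, hbound⟩ := h.exists_bound
    refine ⟨bound, hbound_int, ?_⟩
    filter_upwards [hbound] with a ha t ht using ha t (hr ht)

theorem bdd_smul {𝕜 : Type*} [NormedField 𝕜] [NormedSpace 𝕜 E] [SMulCommClass ℝ 𝕜 E] {φ : α → 𝕜}
    {C : ℝ}
    (h : HasDominatedDerivOn F F' s μ) (hφ : AEStronglyMeasurable φ μ)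
    (hC : ∀ᵐ a ∂μ, ‖φ a‖ ≤ C) :
    HasDominatedDerivOn (fun t a => φ a • F t a) (fun t a => φ a • F' t a) s μ where
  integrable t ht := (h.integrable t ht).bdd_smul C hφ hC
  hasDerivWithinAt := by
    filter_upwards [h.hasDerivWithinAt] with a ha t ht using (ha t ht).const_smul (φ a)
  exists_bound := by
    obtain ⟨bound, hbound_int, hbound⟩ := h.exists_bound
    refine ⟨fun a => C * bound a, hbound_int.const_mul C, ?_⟩
    filter_upwards [hbound, hC] with a ha haC t ht
    exact (norm_smul_le _ _).trans
      (mul_le_mul haC (ha t ht) (norm_nonneg _) ((norm_nonneg _).trans haC))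

theorem aestronglyMeasurable_deriv (h : HasDominatedDerivOn F F' s μ) (hs : s ∈ 𝓝 t) :
    AEStronglyMeasurable (F' t) μ := by
  refine aestronglyMeasurable_of_hasDerivAt (F := F) (t := t) ?_ ?_
  · filter_upwards [hs] with r hr using (h.integrable r hr).aestronglyMeasurable
  · filter_upwards [h.hasDerivWithinAt] with a ha
    exact (ha t (mem_of_mem_nhds hs)).hasDerivAt hs

theorem integrable_deriv (h : HasDominatedDerivOn F F' s μ) (hs : s ∈ 𝓝 t) :
    Integrable (F' t) μ := by
  obtain ⟨bound, hbound_int, hbound⟩ := h.exists_bound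
  refine hbound_int.mono' (h.aestronglyMeasurable_deriv hs) ?_
  filter_upwards [hbound] with a ha using ha t (mem_of_mem_nhds hs)

theorem hasDerivAt_integral (h : HasDominatedDerivOn F F' s μ) (hs : s ∈ 𝓝 t) :
    HasDerivAt (fun t => ∫ a, F t a ∂μ) (∫ a, F' t a ∂μ) t := by
  obtain ⟨bound, hbound_int, hbound⟩ := h.exists_bound
  refine (hasDerivAt_integral_of_dominated_loc_of_deriv_le (interior_mem_nhds.mpr hs) ?_
    (h.integrable t (mem_of_mem_nhds hs)) (h.aestronglyMeasurable_deriv hs) ?_ hbound_int ?_).2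
  · filter_upwards [hs] with r hr using (h.integrable r hr).aestronglyMeasurable
  · filter_upwards [hbound] with a ha r hr using ha r (interior_subset hr)
  · filter_upwards [h.hasDerivWithinAt] with a ha r hr
    exact (ha r (interior_subset hr)).hasDerivAt (mem_interior_iff_mem_nhds.mp hr)

theorem continuousOn_integral (h : HasDominatedDerivOn F F' s μ) (hs : Convex ℝ s) :
    ContinuousOn (fun t => ∫ a, F t a ∂μ) s := by
  obtain ⟨bound, hbound_int, hbound⟩ := h.exists_bound
  refine (LipschitzOnWith.of_dist_le' (K := ∫ a, bound a ∂μ) fun r hr t ht => ?_).continuousOn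
  rw [dist_eq_norm, dist_eq_norm, ← integral_sub (h.integrable r hr) (h.integrable t ht),
    ← integral_mul_const]
  refine norm_integral_le_of_norm_le (hbound_int.mul_const _) ?_
  filter_upwards [h.hasDerivWithinAt, hbound] with a ha hba
  exact hs.norm_image_sub_le_of_norm_hasDerivWithin_le ha hba ht hr

theorem intervalIntegrable_integral_deriv [CompleteSpace E] {a b : ℝ}
    (h : HasDominatedDerivOn F F' (Icc a b) μ) (hab : a ≤ b) :
    IntervalIntegrable (fun t => ∫ x, F' t x ∂μ) volume a b := by
  obtain ⟨bound, hbound_int, hbound⟩ := h.exists_bound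
  refine intervalIntegrable_of_hasDerivAt_of_norm_le hab
    (fun t ht => h.hasDerivAt_integral (Icc_mem_nhds ht.1 ht.2)) (C := ∫ x, bound x ∂μ)
    fun t ht => norm_integral_le_of_norm_le hbound_int ?_
  filter_upwards [hbound] with x hx using hx t (Ioo_subset_Icc_self ht)

end HasDominatedDerivOn

end DominatedDerivative

/-- Lebesgue measure on the half-plane `ℝ × (0, ∞)`, as a product measure for Fubini's theorem. -/
noncomputable def halfPlaneMeasure : Measure (ℝ × ℝ) :=
  (volume : Measure ℝ).prod (volume.restrict (Ioi 0))

theorem halfPlaneMeasure_eq_restrict :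
    halfPlaneMeasure = volume.restrict (univ ×ˢ Ici (0 : ℝ)) := by
  rw [halfPlaneMeasure, Measure.restrict_congr_set Ioi_ae_eq_Ici, Measure.volume_eq_prod,
    ← Measure.prod_restrict, Measure.restrict_univ]

theorem ae_halfPlaneMeasure_snd_pos : ∀ᵐ p ∂halfPlaneMeasure, 0 < p.2 :=
  Measure.quasiMeasurePreserving_snd.ae (ae_restrict_mem measurableSet_Ioi)

theorem hasDominatedDerivOn_halfPlaneMeasure {E : Type*} [NormedAddCommGroup E] [NormedSpace ℝ E]
    {u ut : ℝ → ℝ → ℝ → E} {s : Set ℝ} {bound : ℝ × ℝ → ℝ}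
    (hu : ∀ t ∈ s, Integrable (uncurry fun x₁ x₂ => u x₁ x₂ t) halfPlaneMeasure)
    (hut : ∀ x₁ x₂, 0 < x₂ → ∀ t ∈ s, HasDerivWithinAt (u x₁ x₂) (ut x₁ x₂ t) s t)
    (hbound_int : Integrable bound halfPlaneMeasure)
    (hbound : ∀ x₁ x₂, 0 < x₂ → ∀ t ∈ s, ‖ut x₁ x₂ t‖ ≤ bound (x₁, x₂)) :
    HasDominatedDerivOn (fun t => uncurry fun x₁ x₂ => u x₁ x₂ t)
      (fun t => uncurry fun x₁ x₂ => ut x₁ x₂ t) s halfPlaneMeasure where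
  integrable := hu
  hasDerivWithinAt := ae_halfPlaneMeasure_snd_pos.mono fun p => hut p.1 p.2
  exists_bound := ⟨bound, hbound_int, ae_halfPlaneMeasure_snd_pos.mono fun p => hbound p.1 p.2⟩

/-- The kernel `exp (-i k₁ x₁ - i k₂ x₂)` of the half-plane Fourier transform. -/
noncomputable def halfPlaneKernel (k₁ : ℝ) (k₂ : ℂ) (x₁ x₂ : ℝ) : ℂ :=
  Complex.exp (-Complex.I * (k₁ : ℂ) * (x₁ : ℂ) - Complex.I * k₂ * (x₂ : ℂ))

section Kernel

variable (k₁ : ℝ) (k₂ : ℂ)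

theorem halfPlaneKernel_zero_right (x₁ : ℝ) :
    halfPlaneKernel k₁ k₂ x₁ 0 = Complex.exp (-Complex.I * (k₁ : ℂ) * (x₁ : ℂ)) := by
  simp [halfPlaneKernel]

theorem continuous_uncurry_halfPlaneKernel : Continuous (uncurry (halfPlaneKernel k₁ k₂)) := by
  unfold halfPlaneKernel uncurry
  fun_prop

theorem hasDerivAt_halfPlaneKernel_fst (x₁ x₂ : ℝ) :
    HasDerivAt (fun y => halfPlaneKernel k₁ k₂ y x₂)
      (-(Complex.I * k₁) * halfPlaneKernel k₁ k₂ x₁ x₂) x₁ := by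
  simpa [halfPlaneKernel, mul_comm] using
    ((((hasDerivAt_id x₁).ofReal_comp).const_mul (-Complex.I * (k₁ : ℂ))).sub_const
      (Complex.I * k₂ * (x₂ : ℂ))).cexp

theorem hasDerivAt_halfPlaneKernel_snd (x₁ x₂ : ℝ) :
    HasDerivAt (fun y => halfPlaneKernel k₁ k₂ x₁ y)
      (-(Complex.I * k₂) * halfPlaneKernel k₁ k₂ x₁ x₂) x₂ := by
  simpa [halfPlaneKernel, mul_comm] using
    ((((hasDerivAt_id x₂).ofReal_comp).const_mul (Complex.I * k₂)).const_sub
      (-Complex.I * (k₁ : ℂ) * (x₁ : ℂ))).cexp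

variable {k₂}

theorem norm_halfPlaneKernel_le_one (hk : k₂.im ≤ 0) (x₁ : ℝ) {x₂ : ℝ} (hx₂ : 0 ≤ x₂) :
    ‖halfPlaneKernel k₁ k₂ x₁ x₂‖ ≤ 1 := by
  rw [halfPlaneKernel, Complex.norm_exp, Real.exp_le_one_iff]
  simpa using mul_nonpos_of_nonpos_of_nonneg hk hx₂

theorem ae_norm_halfPlaneKernel_le_one (hk : k₂.im ≤ 0) :
    ∀ᵐ p ∂halfPlaneMeasure, ‖uncurry (halfPlaneKernel k₁ k₂) p‖ ≤ 1 := by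
  filter_upwards [ae_halfPlaneMeasure_snd_pos] with p hp
  exact norm_halfPlaneKernel_le_one k₁ hk p.1 hp.le

end Kernel

section Transform

variable {E : Type*} [NormedAddCommGroup E] [NormedSpace ℂ E]

/-- The half-plane Fourier transform `v̂(k₁, k₂)`, for complex `k₂`. -/
noncomputable def halfPlaneFourier (k₁ : ℝ) (k₂ : ℂ) (v : ℝ → ℝ → E) : E :=
  ∫ x₁ : ℝ, ∫ x₂ in Ioi (0 : ℝ), halfPlaneKernel k₁ k₂ x₁ x₂ • v x₁ x₂

/-- The Fourier transform along the boundary line, in the normalisation of `halfPlaneFourier`;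
the transforms `ĝ₀` and `ĝ₁` are its values on the traces of `u` and `∂_{x₂} u`. -/
noncomputable def boundaryFourier (k₁ : ℝ) (g : ℝ → E) : E :=
  ∫ x₁ : ℝ, Complex.exp (-Complex.I * (k₁ : ℂ) * (x₁ : ℂ)) • g x₁

/-- `v₁` is the partial derivative of `v` in the first variable on the open half-plane, and both
are integrable there. -/
structure HasIntegrableDerivFst (v v₁ : ℝ → ℝ → E) : Prop where
  integrable : Integrable (uncurry v) halfPlaneMeasure
  integrable_deriv : Integrable (uncurry v₁) halfPlaneMeasure
  hasDerivAt : ∀ x₁ x₂, 0 < x₂ → HasDerivAt (fun y => v y x₂) (v₁ x₁ x₂) x₁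

/-- `v₂` is the partial derivative of `v` in the second variable on the closed half-plane,
one-sided on the boundary, and both are integrable. -/
structure HasIntegrableDerivSnd (v v₂ : ℝ → ℝ → E) : Prop where
  integrable : Integrable (uncurry v) halfPlaneMeasure
  integrable_deriv : Integrable (uncurry v₂) halfPlaneMeasure
  hasDerivWithinAt : ∀ x₁ x₂, 0 ≤ x₂ → HasDerivWithinAt (v x₁) (v₂ x₁ x₂) (Ici 0) x₂

/-- `v` has pure first and second partial derivatives, and they and `v` are integrable over the
half-plane. -/
def HasIntegrableSecondDerivs (v : ℝ → ℝ → E) : Prop :=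
  ∃ v₁ v₁₁ v₂ v₂₂ : ℝ → ℝ → E, HasIntegrableDerivFst v v₁ ∧ HasIntegrableDerivFst v₁ v₁₁ ∧
    HasIntegrableDerivSnd v v₂ ∧ HasIntegrableDerivSnd v₂ v₂₂

variable {k₁ : ℝ} {k₂ : ℂ} {v w v₁ v₁₁ v₂ v₂₂ : ℝ → ℝ → E}

theorem halfPlaneFourier_congr (h : ∀ x₁ x₂, 0 < x₂ → v x₁ x₂ = w x₁ x₂) :
    halfPlaneFourier k₁ k₂ v = halfPlaneFourier k₁ k₂ w :=
  integral_congr_ae <| .of_forall fun x₁ =>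
    setIntegral_congr_fun measurableSet_Ioi fun x₂ hx₂ => by simp only [h x₁ x₂ hx₂]

theorem halfPlaneFourier_smul (c : ℂ) (v : ℝ → ℝ → E) :
    halfPlaneFourier k₁ k₂ (fun x₁ x₂ => c • v x₁ x₂) = c • halfPlaneFourier k₁ k₂ v := by
  simp only [halfPlaneFourier, smul_comm _ c, integral_smul]

theorem integrable_halfPlaneKernel_smul (hk : k₂.im ≤ 0)
    (hv : Integrable (uncurry v) halfPlaneMeasure) :
    Integrable (uncurry fun x₁ x₂ => halfPlaneKernel k₁ k₂ x₁ x₂ • v x₁ x₂) halfPlaneMeasure :=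
  hv.bdd_smul 1 (continuous_uncurry_halfPlaneKernel k₁ k₂).aestronglyMeasurable
    (ae_norm_halfPlaneKernel_le_one k₁ hk)

theorem halfPlaneFourier_eq_integral (hk : k₂.im ≤ 0)
    (hv : Integrable (uncurry v) halfPlaneMeasure) :
    halfPlaneFourier k₁ k₂ v
      = ∫ p, uncurry (halfPlaneKernel k₁ k₂) p • uncurry v p ∂halfPlaneMeasure :=
  (integral_prod _ (integrable_halfPlaneKernel_smul hk hv)).symm

theorem halfPlaneFourier_add (hk : k₂.im ≤ 0) (hv : Integrable (uncurry v) halfPlaneMeasure)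
    (hw : Integrable (uncurry w) halfPlaneMeasure) :
    halfPlaneFourier k₁ k₂ (fun x₁ x₂ => v x₁ x₂ + w x₁ x₂)
      = halfPlaneFourier k₁ k₂ v + halfPlaneFourier k₁ k₂ w := by
  have hvw : Integrable (uncurry fun x₁ x₂ => v x₁ x₂ + w x₁ x₂) halfPlaneMeasure := hv.add hw
  rw [halfPlaneFourier_eq_integral hk hv, halfPlaneFourier_eq_integral hk hw,
    halfPlaneFourier_eq_integral hk hvw]
  exact (integral_congr_ae <| .of_forall fun p => smul_add _ _ _).trans
    (integral_add (integrable_halfPlaneKernel_smul hk hv) (integrable_halfPlaneKernel_smul hk hw))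

theorem HasIntegrableDerivFst.halfPlaneFourier_deriv (h : HasIntegrableDerivFst v v₁)
    (hk : k₂.im ≤ 0) :
    halfPlaneFourier k₁ k₂ v₁ = (Complex.I * k₁) • halfPlaneFourier k₁ k₂ v := by
  have hint := integrable_halfPlaneKernel_smul (k₁ := k₁) hk h.integrable
  have hint' := integrable_halfPlaneKernel_smul (k₁ := k₁) hk h.integrable_deriv
  rw [halfPlaneFourier, halfPlaneFourier, integral_integral_swap hint,
    integral_integral_swap hint', ← integral_smul]
  refine integral_congr_ae ?_
  filter_upwards [hint.prod_left_ae, hint'.prod_left_ae, ae_restrict_mem measurableSet_Ioi]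
    with x₂ hslice hslice' hx₂
  exact integral_smul_deriv_of_hasDerivAt_const_mul
    (fun x₁ => hasDerivAt_halfPlaneKernel_fst k₁ k₂ x₁ x₂)
    (fun x₁ => h.hasDerivAt x₁ x₂ hx₂) hslice hslice'

theorem HasIntegrableDerivSnd.hasDerivAt (h : HasIntegrableDerivSnd v v₂) (x₁ : ℝ) {x₂ : ℝ}
    (hx₂ : 0 < x₂) : HasDerivAt (v x₁) (v₂ x₁ x₂) x₂ :=
  (h.hasDerivWithinAt x₁ x₂ hx₂.le).hasDerivAt (Ici_mem_nhds hx₂)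

theorem HasIntegrableDerivSnd.halfPlaneFourier_deriv [CompleteSpace E]
    (h : HasIntegrableDerivSnd v v₂) (hk : k₂.im ≤ 0) :
    halfPlaneFourier k₁ k₂ v₂
      = (Complex.I * k₂) • halfPlaneFourier k₁ k₂ v - boundaryFourier k₁ (fun x₁ => v x₁ 0) := by
  have hint := integrable_halfPlaneKernel_smul (k₁ := k₁) hk h.integrable
  have hint' := integrable_halfPlaneKernel_smul (k₁ := k₁) hk h.integrable_deriv
  have hslices : ∀ᵐ x₁ : ℝ,
      (Complex.I * k₂) • (∫ x₂ in Ioi 0, halfPlaneKernel k₁ k₂ x₁ x₂ • v x₁ x₂)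
      - (∫ x₂ in Ioi 0, halfPlaneKernel k₁ k₂ x₁ x₂ • v₂ x₁ x₂)
      = Complex.exp (-Complex.I * (k₁ : ℂ) * (x₁ : ℂ)) • v x₁ 0 := by
    filter_upwards [hint.prod_right_ae, hint'.prod_right_ae] with x₁ hslice hslice'
    rw [← halfPlaneKernel_zero_right k₁ k₂, sub_eq_iff_eq_add', ← sub_eq_iff_eq_add]
    exact (integral_Ioi_smul_deriv_of_hasDerivAt_const_mul
      (hasDerivAt_halfPlaneKernel_snd k₁ k₂ x₁)
      (h.hasDerivWithinAt x₁ 0 le_rfl).continuousWithinAt (fun x₂ => h.hasDerivAt x₁)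
      hslice hslice').symm
  have hinner : Integrable fun x₁ : ℝ =>
      (Complex.I * k₂) • ∫ x₂ in Ioi 0, halfPlaneKernel k₁ k₂ x₁ x₂ • v x₁ x₂ :=
    hint.integral_prod_left.smul _
  have hinner' : Integrable fun x₁ : ℝ =>
      ∫ x₂ in Ioi 0, halfPlaneKernel k₁ k₂ x₁ x₂ • v₂ x₁ x₂ :=
    hint'.integral_prod_left
  rw [boundaryFourier, ← integral_congr_ae hslices, integral_sub hinner hinner', integral_smul]
  exact (sub_sub_cancel _ _).symm

theorem HasIntegrableDerivFst.deriv_deriv_eq (h₁ : HasIntegrableDerivFst v v₁)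
    (h₁₁ : HasIntegrableDerivFst v₁ v₁₁) (x₁ : ℝ) {x₂ : ℝ} (hx₂ : 0 < x₂) :
    deriv (fun y => deriv (fun y' => v y' x₂) y) x₁ = v₁₁ x₁ x₂ := by
  simp_rw [fun y => (h₁.hasDerivAt y x₂ hx₂).deriv]
  exact (h₁₁.hasDerivAt x₁ x₂ hx₂).deriv

theorem HasIntegrableDerivSnd.deriv_deriv_eq (h₂ : HasIntegrableDerivSnd v v₂)
    (h₂₂ : HasIntegrableDerivSnd v₂ v₂₂) (x₁ : ℝ) {x₂ : ℝ} (hx₂ : 0 < x₂) :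
    deriv (fun y => deriv (v x₁) y) x₂ = v₂₂ x₁ x₂ := by
  have hderiv : (fun y => deriv (v x₁) y) =ᶠ[𝓝 x₂] v₂ x₁ := by
    filter_upwards [Ioi_mem_nhds hx₂] with y hy using (h₂.hasDerivAt x₁ hy).deriv
  rw [hderiv.deriv_eq, (h₂₂.hasDerivAt x₁ hx₂).deriv]

theorem HasIntegrableDerivSnd.derivWithin_zero_eq (h : HasIntegrableDerivSnd v v₂) (x₁ : ℝ) :
    derivWithin (v x₁) (Ici 0) 0 = v₂ x₁ 0 :=
  (h.hasDerivWithinAt x₁ 0 le_rfl).derivWithin (uniqueDiffOn_Ici 0 0 self_mem_Ici)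

theorem HasIntegrableSecondDerivs.integrable (h : HasIntegrableSecondDerivs v) :
    Integrable (uncurry v) halfPlaneMeasure :=
  let ⟨_, _, _, _, h₁, _⟩ := h
  h₁.integrable

theorem HasIntegrableSecondDerivs.halfPlaneFourier_schrodinger [CompleteSpace E]
    {vt f : ℝ → ℝ → E} (hv : HasIntegrableSecondDerivs v)
    (hvt : Integrable (uncurry vt) halfPlaneMeasure)
    (hPDE : ∀ x₁ x₂, 0 < x₂ →
      Complex.I • vt x₁ x₂ + deriv (fun y => deriv (fun y' => v y' x₂) y) x₁
        + deriv (fun y => deriv (fun y' => v x₁ y') y) x₂ = f x₁ x₂)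
    (hk : k₂.im ≤ 0) :
    (Complex.I * ((k₁ : ℂ) ^ 2 + k₂ ^ 2)) • halfPlaneFourier k₁ k₂ v + halfPlaneFourier k₁ k₂ vt
      = k₂ • boundaryFourier k₁ (fun x₁ => v x₁ 0)
        - Complex.I • boundaryFourier k₁ (fun x₁ => derivWithin (v x₁) (Ici 0) 0)
        - Complex.I • halfPlaneFourier k₁ k₂ f := by
  obtain ⟨v₁, v₁₁, v₂, v₂₂, h₁, h₁₁, h₂, h₂₂⟩ := hv
  have hf : halfPlaneFourier k₁ k₂ f = Complex.I • halfPlaneFourier k₁ k₂ vt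
      + halfPlaneFourier k₁ k₂ v₁₁ + halfPlaneFourier k₁ k₂ v₂₂ := by
    have hIvt : Integrable (uncurry fun x₁ x₂ => Complex.I • vt x₁ x₂) halfPlaneMeasure :=
      hvt.smul Complex.I
    have hsum : Integrable (uncurry fun x₁ x₂ => Complex.I • vt x₁ x₂ + v₁₁ x₁ x₂)
        halfPlaneMeasure := hIvt.add h₁₁.integrable_deriv
    rw [← halfPlaneFourier_smul, ← halfPlaneFourier_add hk hIvt h₁₁.integrable_deriv,
      ← halfPlaneFourier_add hk hsum h₂₂.integrable_deriv]
    refine halfPlaneFourier_congr fun x₁ x₂ hx₂ => ?_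
    rw [← hPDE x₁ x₂ hx₂, h₁.deriv_deriv_eq h₁₁ x₁ hx₂, h₂.deriv_deriv_eq h₂₂ x₁ hx₂]
  simp_rw [h₂.derivWithin_zero_eq]
  rw [hf, h₁₁.halfPlaneFourier_deriv hk, h₁.halfPlaneFourier_deriv hk,
    h₂₂.halfPlaneFourier_deriv hk, h₂.halfPlaneFourier_deriv hk]
  match_scalars
  · linear_combination (Complex.I * ((k₁ : ℂ) ^ 2 + k₂ ^ 2)) * Complex.I_sq
  · linear_combination Complex.I_sq
  · linear_combination (-k₂) * Complex.I_sq
  · ring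

theorem HasDominatedDerivOn.cexp_smul_halfPlaneFourier_eq [CompleteSpace E]
    {u ut : ℝ → ℝ → ℝ → E} {a b : ℝ} (c : ℂ)
    (h : HasDominatedDerivOn (fun t => uncurry fun x₁ x₂ => u x₁ x₂ t)
      (fun t => uncurry fun x₁ x₂ => ut x₁ x₂ t) (Icc a b) halfPlaneMeasure)
    (hab : a ≤ b) (hk : k₂.im ≤ 0) :
    Complex.exp (c * b) • halfPlaneFourier k₁ k₂ (fun x₁ x₂ => u x₁ x₂ b)
      = Complex.exp (c * a) • halfPlaneFourier k₁ k₂ (fun x₁ x₂ => u x₁ x₂ a)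
        + ∫ t in a..b, Complex.exp (c * t) • (c • halfPlaneFourier k₁ k₂ (fun x₁ x₂ => u x₁ x₂ t)
            + halfPlaneFourier k₁ k₂ (fun x₁ x₂ => ut x₁ x₂ t)) := by
  have hker := h.bdd_smul (continuous_uncurry_halfPlaneKernel k₁ k₂).aestronglyMeasurable
    (ae_norm_halfPlaneKernel_le_one k₁ hk)
  have hu {t : ℝ} (ht : t ∈ Icc a b) := halfPlaneFourier_eq_integral (k₁ := k₁) hk
    (h.integrable t ht)
  have hut {t : ℝ} (ht : t ∈ Ioo a b) := halfPlaneFourier_eq_integral (k₁ := k₁) hk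
    (h.integrable_deriv (Icc_mem_nhds ht.1 ht.2))
  rw [hu (right_mem_Icc.mpr hab), hu (left_mem_Icc.mpr hab),
    cexp_mul_smul_eq_add_intervalIntegral c hab (hker.continuousOn_integral (convex_Icc a b))
      (fun t ht => hker.hasDerivAt_integral (Icc_mem_nhds ht.1 ht.2))
      (hker.intervalIntegrable_integral_deriv hab)]
  congr 1
  refine intervalIntegral.integral_congr_Ioo_of_le hab fun t ht => ?_
  simp only [hu (Ioo_subset_Icc_self ht), hut ht]

end Transform

section Schwartz

variable {E : Type*} [NormedAddCommGroup E] [NormedSpace ℂ E] {v : ℝ → ℝ → E} {V : 𝓢(ℝ × ℝ, E)}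

theorem integrable_halfPlaneMeasure_of_eq_schwartzMap
    (hv : ∀ x₁ x₂, 0 ≤ x₂ → v x₁ x₂ = V (x₁, x₂)) :
    Integrable (uncurry v) halfPlaneMeasure := by
  have hV : Integrable V halfPlaneMeasure := by
    rw [halfPlaneMeasure_eq_restrict]
    exact V.integrable.restrict
  refine hV.congr ?_
  filter_upwards [ae_halfPlaneMeasure_snd_pos] with p hp using (hv p.1 p.2 hp.le).symm

theorem hasIntegrableDerivFst_of_eq_schwartzMap (hv : ∀ x₁ x₂, 0 ≤ x₂ → v x₁ x₂ = V (x₁, x₂)) :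
    HasIntegrableDerivFst v fun x₁ x₂ => (∂_{((1 : ℝ), (0 : ℝ))} V) (x₁, x₂) where
  integrable := integrable_halfPlaneMeasure_of_eq_schwartzMap hv
  integrable_deriv := integrable_halfPlaneMeasure_of_eq_schwartzMap fun _ _ _ => rfl
  hasDerivAt x₁ x₂ hx₂ := by
    simp_rw [fun y => hv y x₂ hx₂.le, SchwartzMap.lineDerivOp_apply_eq_fderiv]
    exact (V.hasFDerivAt (x₁, x₂)).comp_hasDerivAt x₁
      ((hasDerivAt_id x₁).prodMk (hasDerivAt_const x₁ x₂))

theorem hasIntegrableDerivSnd_of_eq_schwartzMap (hv : ∀ x₁ x₂, 0 ≤ x₂ → v x₁ x₂ = V (x₁, x₂)) :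
    HasIntegrableDerivSnd v fun x₁ x₂ => (∂_{((0 : ℝ), (1 : ℝ))} V) (x₁, x₂) where
  integrable := integrable_halfPlaneMeasure_of_eq_schwartzMap hv
  integrable_deriv := integrable_halfPlaneMeasure_of_eq_schwartzMap fun _ _ _ => rfl
  hasDerivWithinAt x₁ x₂ hx₂ := by
    rw [SchwartzMap.lineDerivOp_apply_eq_fderiv]
    have hV := (V.hasFDerivAt (x₁, x₂)).comp_hasDerivAt x₂
      ((hasDerivAt_const x₂ x₁).prodMk (hasDerivAt_id x₂))
    exact hV.hasDerivWithinAt.congr (fun y hy => hv x₁ y hy) (hv x₁ x₂ hx₂)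

theorem hasIntegrableSecondDerivs_of_eq_schwartzMap
    (hv : ∀ x₁ x₂, 0 ≤ x₂ → v x₁ x₂ = V (x₁, x₂)) : HasIntegrableSecondDerivs v :=
  ⟨_, _, _, _, hasIntegrableDerivFst_of_eq_schwartzMap hv,
    hasIntegrableDerivFst_of_eq_schwartzMap fun _ _ _ => rfl,
    hasIntegrableDerivSnd_of_eq_schwartzMap hv,
    hasIntegrableDerivSnd_of_eq_schwartzMap fun _ _ _ => rfl⟩

end Schwartz

theorem global_relation_forced_linear_schrodinger_general {E : Type*} [NormedAddCommGroup E]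
    [NormedSpace ℂ E] [CompleteSpace E] {T : ℝ} {u f ut : ℝ → ℝ → ℝ → E}
    (hu : ∀ t ∈ Ioo 0 T, HasIntegrableSecondDerivs fun x₁ x₂ => u x₁ x₂ t)
    (hut : HasDominatedDerivOn (fun t => uncurry fun x₁ x₂ => u x₁ x₂ t)
      (fun t => uncurry fun x₁ x₂ => ut x₁ x₂ t) (Icc 0 T) halfPlaneMeasure)
    (hPDE : ∀ x₁ x₂, 0 < x₂ → ∀ t ∈ Ioo 0 T,
      Complex.I • ut x₁ x₂ t + deriv (fun y => deriv (fun y' => u y' x₂ t) y) x₁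
        + deriv (fun y => deriv (fun y' => u x₁ y' t) y) x₂ = f x₁ x₂ t)
    (k₁ : ℝ) {k₂ : ℂ} (hk : k₂.im ≤ 0) {t : ℝ} (ht : t ∈ Icc 0 T) :
    Complex.exp (Complex.I * ((k₁ : ℂ) ^ 2 + k₂ ^ 2) * t)
        • halfPlaneFourier k₁ k₂ (fun x₁ x₂ => u x₁ x₂ t)
      = halfPlaneFourier k₁ k₂ (fun x₁ x₂ => u x₁ x₂ 0)
        + ∫ t' in (0 : ℝ)..t, Complex.exp (Complex.I * ((k₁ : ℂ) ^ 2 + k₂ ^ 2) * t')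
            • (k₂ • boundaryFourier k₁ (fun x₁ => u x₁ 0 t')
              - Complex.I • boundaryFourier k₁
                  (fun x₁ => derivWithin (fun y => u x₁ y t') (Ici 0) 0)
              - Complex.I • halfPlaneFourier k₁ k₂ (fun x₁ x₂ => f x₁ x₂ t')) := by
  rw [(hut.mono (Icc_subset_Icc_right ht.2)).cexp_smul_halfPlaneFourier_eq _ ht.1 hk,
    Complex.ofReal_zero, mul_zero, Complex.exp_zero, one_smul]
  congr 1
  refine intervalIntegral.integral_congr_Ioo_of_le ht.1 fun t' ht' => ?_
  have ht'T : t' ∈ Ioo 0 T := Ioo_subset_Ioo_right ht.2 ht'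
  exact congrArg _ ((hu t' ht'T).halfPlaneFourier_schrodinger
    (hut.integrable_deriv (Icc_mem_nhds ht'T.1 ht'T.2))
    (fun x₁ x₂ hx₂ => hPDE x₁ x₂ hx₂ t' ht'T) hk)

/-- Global relation of the unified transform (Fokas) method for the forced linear
Schrödinger equation i∂ₜu + ∂²_{x₁}u + ∂²_{x₂}u = f on the half-plane ℝ × (0,∞),
valid for k₁ ∈ ℝ, Im(k₂) ≤ 0, and t ∈ [0,T]. -/
theorem global_relation_forced_linear_schrodinger (T : ℝ) (hT : 0 < T)
    (u f ut : ℝ → ℝ → ℝ → ℂ)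
    -- (i) each time slice of u and f is the restriction to ℝ × [0,∞) of a Schwartz function
    (hSchwartz : ∀ t ∈ Icc (0:ℝ) T, ∃ U F : SchwartzMap (ℝ × ℝ) ℂ,
      ∀ x₁ x₂ : ℝ, 0 ≤ x₂ → u x₁ x₂ t = U (x₁, x₂) ∧ f x₁ x₂ t = F (x₁, x₂))
    -- (ii) u is continuously differentiable in t with derivative ut
    (hut : ∀ (x₁ x₂ : ℝ), 0 ≤ x₂ → ∀ t ∈ Icc (0:ℝ) T,
      HasDerivAt (fun τ => u x₁ x₂ τ) (ut x₁ x₂ t) t)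
    -- (ii) ∂ₜu and all spatial derivatives of u up to second order are jointly
    -- continuous and dominated, uniformly in t, by an integrable function of (x₁,x₂)
    (hreg : ∀ g ∈ [ut, u,
        fun x₁ x₂ t => deriv (fun y => u y x₂ t) x₁,
        fun x₁ x₂ t => derivWithin (fun y => u x₁ y t) (Ici 0) x₂,
        fun x₁ x₂ t => deriv (fun y => deriv (fun y' => u y' x₂ t) y) x₁,
        fun x₁ x₂ t => derivWithin (fun y => derivWithin (fun y' => u x₁ y' t) (Ici 0) y)
          (Ici 0) x₂],
      ContinuousOn (fun p : ℝ × ℝ × ℝ => g p.1 p.2.1 p.2.2)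
          (Set.univ ×ˢ Ici (0:ℝ) ×ˢ Icc (0:ℝ) T) ∧
        ∃ dom : ℝ × ℝ → ℝ, IntegrableOn dom (Set.univ ×ˢ Ici (0:ℝ)) ∧
          ∀ (x₁ x₂ : ℝ), 0 ≤ x₂ → ∀ t ∈ Icc (0:ℝ) T, ‖g x₁ x₂ t‖ ≤ dom (x₁, x₂))
    -- (iii) the forced linear Schrödinger equation holds on ℝ × (0,∞) × (0,T)
    (hPDE : ∀ (x₁ x₂ : ℝ), 0 < x₂ → ∀ t ∈ Ioo (0:ℝ) T,
      Complex.I * ut x₁ x₂ t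
        + deriv (fun y => deriv (fun y' => u y' x₂ t) y) x₁
        + deriv (fun y => deriv (fun y' => u x₁ y' t) y) x₂
        = f x₁ x₂ t) :
    -- the global relation
    ∀ (k₁ : ℝ) (k₂ : ℂ), k₂.im ≤ 0 → ∀ t ∈ Icc (0:ℝ) T,
      Complex.exp (Complex.I * ((k₁:ℂ)^2 + k₂^2) * (t:ℂ))
          * (∫ x₁ : ℝ, ∫ x₂ in Ioi (0:ℝ),
              Complex.exp (-Complex.I * (k₁:ℂ) * (x₁:ℂ) - Complex.I * k₂ * (x₂:ℂ))
                * u x₁ x₂ t)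
        = (∫ x₁ : ℝ, ∫ x₂ in Ioi (0:ℝ),
              Complex.exp (-Complex.I * (k₁:ℂ) * (x₁:ℂ) - Complex.I * k₂ * (x₂:ℂ))
                * u x₁ x₂ 0)
          + ∫ t' in (0:ℝ)..t,
              Complex.exp (Complex.I * ((k₁:ℂ)^2 + k₂^2) * (t':ℂ))
                * (k₂ * (∫ x₁ : ℝ, Complex.exp (-Complex.I * (k₁:ℂ) * (x₁:ℂ)) * u x₁ 0 t')
                  - Complex.I * (∫ x₁ : ℝ, Complex.exp (-Complex.I * (k₁:ℂ) * (x₁:ℂ))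
                      * derivWithin (fun y => u x₁ y t') (Ici 0) 0)
                  - Complex.I * (∫ x₁ : ℝ, ∫ x₂ in Ioi (0:ℝ),
                      Complex.exp (-Complex.I * (k₁:ℂ) * (x₁:ℂ) - Complex.I * k₂ * (x₂:ℂ))
                        * f x₁ x₂ t')) := by
  intro k₁ k₂ hk t ht
  obtain ⟨-, dom, hdom, hbound⟩ := hreg ut (by simp)
  have hu : ∀ t ∈ Icc 0 T, HasIntegrableSecondDerivs fun x₁ x₂ => u x₁ x₂ t := fun t ht =>
    let ⟨_, _, hUF⟩ := hSchwartz t ht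
    hasIntegrableSecondDerivs_of_eq_schwartzMap fun x₁ x₂ hx₂ => (hUF x₁ x₂ hx₂).1
  have hdominated := hasDominatedDerivOn_halfPlaneMeasure (fun t ht => (hu t ht).integrable)
    (fun x₁ x₂ hx₂ t ht => (hut x₁ x₂ hx₂.le t ht).hasDerivWithinAt)
    (halfPlaneMeasure_eq_restrict ▸ hdom) fun x₁ x₂ hx₂ => hbound x₁ x₂ hx₂.le
  exact global_relation_forced_linear_schrodinger_general
    (fun t ht => hu t (Ioo_subset_Icc_self ht)) hdominated hPDE k₁ hk ht
end
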